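/- Lower Gaussian bound (Theorem 1.1, lower part): For every real μ ≥ 1 there exists a constant C > 0 such that for every choice of continuous ν, a : ℝ → ℝ with 1/μ ≤ ν(x) ≤ μ and 1/μ ≤ a(x) ≤ μ for all x, every real W ≥ 0, every corrector T and every fundamental solution P of the canonical equation, one has P(t,x,y) ≥ (1/(C t^{1/2}))·exp(−C|T(x) − T(y) − W t|²/t) for all t > 0 and all x, y ∈ ℝ. -/

import Mathlib

open MeasureTheory Filter

/-- Two-sided ellipticity bounds `1/μ ≤ f ≤ μ`. -/
def Elliptic (μ : ℝ) (f : ℝ → ℝ) : Prop := ∀ x : ℝ, 1 / μ ≤ f x ∧ f x ≤ μ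

/-- A classical solution of the canonical equation
`ν(x)∂ₜp − ∂ₓ(ν(x)a(x)∂ₓp) + W∂ₓp = 0` for every time `t ∈ s` and every `x ∈ ℝ`. -/
def IsCanonicalSolOn (ν a : ℝ → ℝ) (W : ℝ) (u : ℝ → ℝ → ℝ) (s : Set ℝ) : Prop :=
  ∃ ut ux q : ℝ → ℝ → ℝ, ∀ t ∈ s, ∀ x : ℝ,
    HasDerivAt (fun τ => u τ x) (ut t x) t ∧
    HasDerivAt (fun ξ => u t ξ) (ux t x) x ∧
    HasDerivAt (fun ξ => ν ξ * a ξ * ux t ξ) (q t x) x ∧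
    ν x * ut t x - q t x + W * ux t x = 0

/-- A corrector: `T(0) = 0`, `−(aνT')' + WT' = Wν` and `1/μ⁵ ≤ T' ≤ μ⁵`. -/
def IsCorrector (μ : ℝ) (ν a : ℝ → ℝ) (W : ℝ) (T : ℝ → ℝ) : Prop :=
  T 0 = 0 ∧ ∃ T' : ℝ → ℝ,
    (∀ x, HasDerivAt T (T' x) x) ∧
    (∀ x, HasDerivAt (fun y => a y * ν y * T' y) (W * T' x - W * ν x) x) ∧
    (∀ x, 1 / μ ^ 5 ≤ T' x ∧ T' x ≤ μ ^ 5)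

/-- An adjoint corrector: `T̃(0) = 0`, `(aνT̃')' + WT̃' = Wν` and `1/μ⁵ ≤ T̃' ≤ μ⁵`. -/
def IsAdjointCorrector (μ : ℝ) (ν a : ℝ → ℝ) (W : ℝ) (T : ℝ → ℝ) : Prop :=
  T 0 = 0 ∧ ∃ T' : ℝ → ℝ,
    (∀ x, HasDerivAt T (T' x) x) ∧
    (∀ x, HasDerivAt (fun y => a y * ν y * T' y) (W * ν x - W * T' x) x) ∧
    (∀ x, 1 / μ ^ 5 ≤ T' x ∧ T' x ≤ μ ^ 5)

/-- A fundamental solution of the canonical equation. -/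
def IsFundSol (ν a : ℝ → ℝ) (W : ℝ) (P : ℝ → ℝ → ℝ → ℝ) : Prop :=
  (∀ y : ℝ, IsCanonicalSolOn ν a W (fun t x => P t x y) (Set.Ioi 0)) ∧
  (∀ y : ℝ, ∀ t : ℝ, 0 < t → ∀ x : ℝ, 0 ≤ P t x y) ∧
  (∀ y : ℝ, ∀ t : ℝ, 0 < t → ∫ x : ℝ, ν x * P t x y = 1) ∧
  (∀ y : ℝ, ∀ φ : ℝ → ℝ, Continuous φ → (∃ B : ℝ, ∀ x, |φ x| ≤ B) →
    Tendsto (fun t => ∫ x : ℝ, ν x * P t x y * φ x)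
      (nhdsWithin 0 (Set.Ioi 0)) (nhds (φ y))) ∧
  (∀ s t : ℝ, 0 < s → 0 < t → ∀ x y : ℝ,
    P (t + s) x y = ∫ z : ℝ, ν z * P t x z * P s z y)

section Helpers
open Set Topology
open scoped BoundedContinuousFunction


/-- Abstract continuation-in-time lemma behind all minimum principles below. -/
lemma time_lemma {X : Type*} [TopologicalSpace X] {K : Set X} (hK : IsCompact K) {c d : ℝ}
    (w : ℝ → X → ℝ)
    (hc : ∀ t ∈ Ioc c d, ContinuousOn (w t) K)
    (H1 : ∀ t ∈ Ioc c d, ∀ x ∈ K, w t x < 0 → (∀ x' ∈ K, w t x ≤ w t x') →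
      ∀ᶠ s in 𝓝[<] t, w s x < w t x)
    (H2 : ∀ t ∈ Ioo c d, ∀ x ∈ K, ∀ r, r < w t x →
      ∀ᶠ p in 𝓝 x ×ˢ 𝓝[>] t, p.1 ∈ K → r < w p.2 p.1)
    (H0 : ∀ x ∈ K, ∀ r < (0 : ℝ), ∀ᶠ p in 𝓝 x ×ˢ 𝓝[>] c, p.1 ∈ K → r < w p.2 p.1) :
    ∀ t ∈ Ioc c d, ∀ x ∈ K, 0 ≤ w t x := by
  by_contra! hcon
  obtain ⟨t₁, ht₁, x₁, hx₁, hneg⟩ := hcon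
  set r := w t₁ x₁ with hr
  let Bad : Set ℝ := {t | ∃ x ∈ K, w t x ≤ r}
  have cpt : ∀ t, (∀ x ∈ K, ∀ᶠ p in 𝓝 x ×ˢ 𝓝[>] t, p.1 ∈ K → r < w p.2 p.1) →
      ∀ᶠ s in 𝓝[>] t, s ∉ Bad := by
    intro t h
    have h3 : ∀ᶠ q in 𝓝ˢ K ×ˢ 𝓝[>] t, q.1 ∈ K → r < w q.2 q.1 := by
      rw [hK.nhdsSet_prod_eq_biSup]
      simpa [Filter.eventually_iSup] using h
    have h4 : ∀ᶠ s in 𝓝[>] t, ∀ x ∈ K, r < w s x := by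
      obtain ⟨P, hP, Q, hQ, hPQ⟩ := Filter.eventually_prod_iff.1 h3
      filter_upwards [hQ] with s hs x hx
      exact hPQ (hP.self_of_nhdsSet x hx) hs hx
    filter_upwards [h4] with s hs
    rintro ⟨x, hx, hle⟩
    exact absurd (hs x hx) (not_lt.2 hle)
  have leftBad : ∀ t ∈ Ioc c d, t ∈ Bad → ∀ᶠ s in 𝓝[<] t, s ∈ Bad := by
    rintro t ht ⟨x, hx, hle⟩
    obtain ⟨z, hz, hmin⟩ := hK.exists_isMinOn ⟨x, hx⟩ (hc t ht)
    have hz' : w t z ≤ r := (hmin hx).trans hle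
    filter_upwards [H1 t ht z hz (hz'.trans_lt hneg) (fun x' hx' => hmin hx')] with s hs
    exact ⟨z, hz, hs.le.trans hz'⟩
  let S : Set ℝ := {t | c ≤ t ∧ t ≤ t₁ ∧ ∀ s ∈ Ioc t t₁, s ∈ Bad}
  have hS1 : t₁ ∈ S := ⟨ht₁.1.le, le_rfl, fun s hs => absurd hs.1 (not_lt.2 hs.2)⟩
  have hSb : BddBelow S := ⟨c, fun t ht => ht.1⟩
  set τ := sInf S
  have hτ1 : τ ≤ t₁ := csInf_le hSb hS1
  have hcτ : c ≤ τ := le_csInf ⟨_, hS1⟩ fun t ht => ht.1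
  have hbad : ∀ s ∈ Ioc τ t₁, s ∈ Bad := by
    intro s hs
    obtain ⟨t, ht, hts⟩ := exists_lt_of_csInf_lt ⟨_, hS1⟩ hs.1
    exact ht.2.2 s ⟨hts, hs.2⟩
  have notright : τ < t₁ → ¬ ∀ᶠ s in 𝓝[>] τ, s ∉ Bad := by
    intro h1 h2
    have : ∀ᶠ s in 𝓝[>] τ, s ∈ Ioc τ t₁ := Ioc_mem_nhdsGT h1
    obtain ⟨s, hs, hs'⟩ := (h2.and this).exists
    exact hs (hbad s hs')
  rcases hcτ.eq_or_lt with h | h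
  · apply notright (by rw [← h]; exact ht₁.1)
    rw [← h]
    exact cpt c fun x hx => H0 x hx r hneg
  · by_cases hB : τ ∈ Bad
    · have h1 := leftBad τ ⟨h, hτ1.trans ht₁.2⟩ hB
      obtain ⟨s₀, hs₀, hsub⟩ := (mem_nhdsLT_iff_exists_Ioo_subset).1 h1
      have hm : max s₀ c < τ := max_lt hs₀ h
      have : max s₀ c ∈ S := by
        refine ⟨le_max_right _ _, hm.le.trans hτ1, fun s hs => ?_⟩
        rcases lt_trichotomy s τ with h' | h' | h'
        · exact hsub ⟨(le_max_left _ _).trans_lt hs.1, h'⟩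
        · rw [h']; exact hB
        · exact hbad s ⟨h', hs.2⟩
      exact absurd (csInf_le hSb this) (not_le.2 hm)
    · have hlt : τ < t₁ := by
        rcases hτ1.eq_or_lt with h' | h'
        · exfalso; apply hB; rw [h']; exact ⟨x₁, hx₁, le_rfl⟩
        · exact h'
      apply notright hlt
      refine cpt τ fun x hx => H2 τ ⟨h, hlt.trans_le ht₁.2⟩ x hx r ?_
      by_contra hle
      exact hB ⟨x, hx, not_lt.1 hle⟩

/-- Second order condition at a local minimum, in flux form. -/
lemma flux_min {k w wx : ℝ → ℝ} {x q : ℝ} (hk : ∀ ξ, 0 < k ξ)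
    (hw : ∀ᶠ ξ in 𝓝 x, HasDerivAt w (wx ξ) ξ) (hmin : IsLocalMin w x)
    (hq : HasDerivAt (fun ξ => k ξ * wx ξ) q x) : wx x = 0 ∧ 0 ≤ q := by
  have h0 : wx x = 0 := hmin.hasDerivAt_eq_zero hw.self_of_nhds
  refine ⟨h0, ?_⟩
  by_contra! hneg
  have h1 : ∀ᶠ ξ in 𝓝[>] x, k ξ * wx ξ < 0 := by
    have := (hasDerivAt_iff_tendsto_slope.1 hq).eventually (gt_mem_nhds hneg)
    have h2 : ∀ᶠ ξ in 𝓝[>] x, slope (fun ξ => k ξ * wx ξ) x ξ < 0 :=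
      this.filter_mono (nhdsWithin_mono _ (fun y hy => ne_of_gt hy))
    filter_upwards [h2, self_mem_nhdsWithin] with ξ hξ hlt
    rw [slope_def_field, h0, mul_zero, sub_zero] at hξ
    have hp : 0 < ξ - x := sub_pos.2 hlt
    by_contra! hge
    exact absurd hξ (not_lt.2 (div_nonneg hge hp.le))
  have h2 : ∀ᶠ ξ in 𝓝[>] x, wx ξ < 0 ∧ HasDerivAt w (wx ξ) ξ ∧ w x ≤ w ξ := by
    filter_upwards [h1, hw.filter_mono nhdsWithin_le_nhds,
      (show ∀ᶠ ξ in 𝓝 x, w x ≤ w ξ from hmin).filter_mono nhdsWithin_le_nhds] with ξ a1 a2 a3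
    exact ⟨by by_contra! hge; exact absurd a1 (not_lt.2 (mul_nonneg (hk ξ).le hge)), a2, a3⟩
  obtain ⟨u, hu, hsub⟩ := (mem_nhdsGT_iff_exists_Ioo_subset).1 h2
  have hu' : x < u := hu
  set b := (x + u) / 2
  have hxb : x < b := by simp only [b]; linarith
  have hbu : b < u := by simp only [b]; linarith
  have hcont : ContinuousOn w (Icc x b) := by
    intro z hz
    rcases hz.1.eq_or_lt with h | h
    · rw [← h]; exact hw.self_of_nhds.continuousAt.continuousWithinAt
    · exact (hsub ⟨h, hz.2.trans_lt hbu⟩).2.1.continuousAt.continuousWithinAt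
  obtain ⟨z, hz, hz2⟩ := exists_hasDerivAt_eq_slope w wx hxb hcont
    (fun z hz => (hsub ⟨hz.1, hz.2.trans hbu⟩).2.1)
  have h3 := (hsub ⟨hz.1, hz.2.trans hbu⟩).1
  have h4 := (hsub ⟨hxb, hbu⟩).2.2
  rw [hz2] at h3
  exact absurd h3 (not_lt.2 (div_nonneg (by linarith) (by linarith)))

/-- Positive time derivative gives strictly smaller values just before. -/
lemma eventually_lt_left {f : ℝ → ℝ} {f' t : ℝ} (h : HasDerivAt f f' t) (hp : 0 < f') :
    ∀ᶠ s in 𝓝[<] t, f s < f t := by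
  have := (hasDerivAt_iff_tendsto_slope.1 h).eventually (lt_mem_nhds hp)
  have h2 : ∀ᶠ ξ in 𝓝[<] t, 0 < slope f t ξ :=
    this.filter_mono (nhdsWithin_mono _ (fun y hy => ne_of_lt hy))
  filter_upwards [h2, self_mem_nhdsWithin] with ξ hξ hlt
  rw [slope_def_field] at hξ
  have hp : ξ - t < 0 := sub_neg.2 hlt
  by_contra! hge
  exact absurd hξ (not_lt.2 (div_nonpos_of_nonneg_of_nonpos (by linarith) hp.le))

/-- Minimum principle for strict supersolutions. -/
lemma min_principle {ν a : ℝ → ℝ} {W : ℝ} (hν : ∀ x, 0 < ν x) (ha : ∀ x, 0 < a x)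
    {c d α β : ℝ} (w wt wx q : ℝ → ℝ → ℝ)
    (hder : ∀ t ∈ Ioc c d, ∀ x ∈ Ioo α β, HasDerivAt (fun s => w s x) (wt t x) t ∧
      HasDerivAt (w t) (wx t x) x ∧ HasDerivAt (fun ξ => ν ξ * a ξ * wx t ξ) (q t x) x ∧
      0 < ν x * wt t x - q t x + W * wx t x)
    (hc : ∀ t ∈ Ioc c d, ContinuousOn (w t) (Icc α β))
    (hside : ∀ t ∈ Ioc c d, 0 ≤ w t α ∧ 0 ≤ w t β)
    (H2 : ∀ t ∈ Ioo c d, ∀ x ∈ Icc α β, ∀ r, r < w t x →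
      ∀ᶠ p in 𝓝 x ×ˢ 𝓝[>] t, p.1 ∈ Icc α β → r < w p.2 p.1)
    (H0 : ∀ x ∈ Icc α β, ∀ r < (0 : ℝ),
      ∀ᶠ p in 𝓝 x ×ˢ 𝓝[>] c, p.1 ∈ Icc α β → r < w p.2 p.1) :
    ∀ t ∈ Ioc c d, ∀ x ∈ Icc α β, 0 ≤ w t x := by
  refine time_lemma isCompact_Icc w hc ?_ H2 H0
  intro t ht x hx hneg hmin
  have hx' : x ∈ Ioo α β := by
    refine ⟨lt_of_le_of_ne hx.1 ?_, lt_of_le_of_ne hx.2 ?_⟩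
    · rintro rfl; exact absurd hneg (not_lt.2 (hside t ht).1)
    · rintro rfl; exact absurd hneg (not_lt.2 (hside t ht).2)
  obtain ⟨h1, h2, h3, h4⟩ := hder t ht x hx'
  have hlm : IsLocalMin (w t) x := by
    filter_upwards [Icc_mem_nhds hx'.1 hx'.2] with z hz using hmin z hz
  have hev : ∀ᶠ ξ in 𝓝 x, HasDerivAt (w t) (wx t ξ) ξ := by
    filter_upwards [Ioo_mem_nhds hx'.1 hx'.2] with z hz using (hder t ht z hz).2.1
  obtain ⟨e1, e2⟩ := flux_min (k := fun ξ => ν ξ * a ξ) (fun ξ => mul_pos (hν ξ) (ha ξ)) hev hlm h3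
  refine eventually_lt_left h1 ?_
  rw [e1] at h4
  have : 0 < ν x * wt t x := by linarith
  exact (mul_pos_iff_of_pos_left (hν x)).1 this


/-- A corner barrier: an explicit supersolution which equals one at the corner `(c, x₀)`
and is small for later times when `ε` is small. -/
lemma corner_barrier {ν a : ℝ → ℝ} {W m₀ M₀ n₀ : ℝ} (hνc : Continuous ν) (hac : Continuous a)
    (hν : ∀ x, 0 < ν x) (ha : ∀ x, 0 < a x) (hm₀ : 0 < m₀) (hn₀ : 0 < n₀)
    (hm : ∀ x, m₀ ≤ ν x * ν x * a x) (hM : ∀ x, ν x * ν x * a x ≤ M₀)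
    (hn : ∀ x, n₀ ≤ ν x * a x) (c x₀ ε : ℝ) (hε : 0 < ε) :
    ∃ K Kt Kx Kq : ℝ → ℝ → ℝ,
      (∀ t x, 0 ≤ K t x) ∧ K c x₀ = 1 ∧
      (∀ t, c ≤ t → ∀ x, ContinuousAt (fun p : ℝ × ℝ => K p.1 p.2) (t, x)) ∧
      (∀ t x, K t x ≤ Real.exp (- (m₀ / 4 / M₀) * Real.log ((t - c + ε) / ε)) ∨ t < c) ∧
      ∀ t, c ≤ t → ∀ x, |W| * |x - x₀| ≤ n₀ / 2 →
        HasDerivAt (fun s => K s x) (Kt t x) t ∧ HasDerivAt (K t) (Kx t x) x ∧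
        HasDerivAt (fun ξ => ν ξ * a ξ * Kx t ξ) (Kq t x) x ∧
        0 ≤ ν x * Kt t x - Kq t x + W * Kx t x := by
  set y : ℝ → ℝ := fun x => ∫ s in x₀..x, 1 / (ν s * a s) with hy
  have hcont : Continuous fun s => 1 / (ν s * a s) :=
    continuous_const.div (hνc.mul hac) fun s => (mul_pos (hν s) (ha s)).ne'
  have hyd : ∀ x, HasDerivAt y (1 / (ν x * a x)) x := fun x =>
    intervalIntegral.integral_hasDerivAt_right (hcont.intervalIntegrable _ _)
      hcont.aestronglyMeasurable.stronglyMeasurableAtFilter hcont.continuousAt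
  have hyc : Continuous y := continuous_iff_continuousAt.2 fun x => (hyd x).continuousAt
  have hyb : ∀ x, |y x| ≤ |x - x₀| / n₀ := by
    intro x
    have := intervalIntegral.norm_integral_le_of_norm_le_const (a := x₀) (b := x) (C := 1 / n₀)
      (f := fun s => 1 / (ν s * a s)) (by
        intro s _
        rw [Real.norm_eq_abs, abs_of_pos (one_div_pos.2 (mul_pos (hν s) (ha s)))]
        exact one_div_le_one_div_of_le hn₀ (hn s))
    rw [Real.norm_eq_abs] at this
    calc |y x| ≤ _ := this
      _ = _ := by ring
  have hM₀ : 0 < M₀ := hm₀.trans_le ((hm 0).trans (hM 0))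
  set b := m₀ / 4 with hb
  set κ := m₀ / 4 / M₀ with hκ
  have hbp : 0 < b := by positivity
  have hκp : 0 < κ := by positivity
  let K : ℝ → ℝ → ℝ := fun t x =>
    Real.exp (-κ * Real.log ((t - c + ε) / ε) - b * y x ^ 2 / (t - c + ε))
  refine ⟨K, fun t x => K t x * (-κ / (t - c + ε) + b * y x ^ 2 / (t - c + ε) ^ 2),
    fun t x => K t x * (-2 * b * y x / (t - c + ε)) * (1 / (ν x * a x)),
    fun t x => K t x * (1 / (ν x * a x)) *
      (4 * b ^ 2 * y x ^ 2 / (t - c + ε) ^ 2 - 2 * b / (t - c + ε)),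
    fun t x => (Real.exp_pos _).le, ?_, ?_, ?_, ?_⟩
  · simp [K, hy, hε.ne']
  · intro t ht x
    have h1 : t - c + ε ≠ 0 := by linarith
    apply ContinuousAt.rexp
    apply ContinuousAt.sub
    · apply continuousAt_const.mul
      apply ContinuousAt.log
      · fun_prop
      · exact div_ne_zero h1 hε.ne'
    · apply ContinuousAt.div
      · fun_prop
      · fun_prop
      · exact h1
  · intro t x
    rcases lt_or_ge t c with h | h
    · exact Or.inr h
    · left
      apply Real.exp_le_exp.2
      have : 0 ≤ b * y x ^ 2 / (t - c + ε) := by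
        apply div_nonneg (by positivity); linarith
      linarith
  · intro t ht x hx
    have h1 : 0 < t - c + ε := by linarith
    have hna : 0 < ν x * a x := mul_pos (hν x) (ha x)
    have hKx : ∀ x, HasDerivAt (K t) (K t x * (-2 * b * y x / (t - c + ε)) * (1 / (ν x * a x))) x := by
      intro x
      have := ((((hyd x).fun_pow 2).const_mul b).div_const (t - c + ε)).const_sub
        (-κ * Real.log ((t - c + ε) / ε))
      refine this.exp.congr_deriv ?_
      simp only [K]
      push_cast
      ring
    refine ⟨?_, hKx x, ?_, ?_⟩
    · have d1 : HasDerivAt (fun s => s - c + ε) 1 t :=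
        ((hasDerivAt_id t).sub_const c).add_const ε
      have d2 := ((d1.div_const ε).log (div_pos h1 hε).ne').const_mul (-κ)
      have d3 := (d1.fun_inv h1.ne').const_mul (b * y x ^ 2)
      have := (d2.sub d3).exp
      refine (this.congr_of_eventuallyEq ?_).congr_deriv ?_
      · refine Eventually.of_forall fun s => ?_
        simp only [K, div_eq_mul_inv, Pi.sub_apply]
      · simp only [K, Pi.sub_apply, div_eq_mul_inv]
        congr 1
        field_simp
        try ring
    · have hfun : (fun ξ => ν ξ * a ξ * (K t ξ * (-2 * b * y ξ / (t - c + ε)) * (1 / (ν ξ * a ξ))))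
          = fun ξ => K t ξ * (-2 * b * y ξ / (t - c + ε)) := by
        funext ξ
        have h1 := (hν ξ).ne'
        have h2 := (ha ξ).ne'
        field_simp
      rw [hfun]
      have := (hKx x).mul (((hyd x).const_mul (-2 * b)).div_const (t - c + ε))
      refine this.congr_deriv ?_
      field_simp
      ring
    · have hWy : |W * y x| ≤ 1 / 2 := by
        rw [abs_mul]
        calc |W| * |y x| ≤ |W| * (|x - x₀| / n₀) := by gcongr; exact hyb x
          _ = (|W| * |x - x₀|) / n₀ := by ring
          _ ≤ (n₀ / 2) / n₀ := by gcongr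
          _ = 1 / 2 := by field_simp
      have hWy2 := (abs_le.1 hWy).2
      have key : ν x * (K t x * (-κ / (t - c + ε) + b * y x ^ 2 / (t - c + ε) ^ 2)) -
          K t x * (1 / (ν x * a x)) * (4 * b ^ 2 * y x ^ 2 / (t - c + ε) ^ 2 - 2 * b / (t - c + ε)) +
          W * (K t x * (-2 * b * y x / (t - c + ε)) * (1 / (ν x * a x))) =
          K t x * (1 / (ν x * a x)) * (1 / (t - c + ε)) *
           ((b * y x ^ 2 / (t - c + ε)) * (ν x * ν x * a x - 4 * b) +
            (2 * b - κ * (ν x * ν x * a x) - 2 * b * (W * y x))) := by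
        have := (hν x).ne'
        have := (ha x).ne'
        field_simp
        ring
      rw [key]
      have hKp : 0 ≤ K t x := (Real.exp_pos _).le
      have e1 : 0 ≤ ν x * ν x * a x - 4 * b := by have := hm x; rw [hb]; linarith
      have e2 : κ * (ν x * ν x * a x) ≤ b := by
        calc κ * (ν x * ν x * a x) ≤ κ * M₀ := by gcongr; exact hM x
          _ = b := by rw [hκ, hb]; field_simp
      have e3 : 0 ≤ 2 * b - κ * (ν x * ν x * a x) - 2 * b * (W * y x) := by nlinarith
      positivity


/-- Lower semicontinuity with respect to the future. -/
def FutureLsc (u : ℝ → ℝ → ℝ) (t x : ℝ) : Prop :=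
  ∀ r, r < u t x → ∀ᶠ p in 𝓝 x ×ˢ 𝓝[>] t, r < u p.2 p.1

lemma tendsto_swap_of_continuousAt {K : ℝ → ℝ → ℝ} {t x : ℝ}
    (h : ContinuousAt (fun p : ℝ × ℝ => K p.1 p.2) (t, x)) :
    Tendsto (fun p : ℝ × ℝ => K p.2 p.1) (𝓝 x ×ˢ 𝓝[>] t) (𝓝 (K t x)) := by
  have h1 : Tendsto (fun p : ℝ × ℝ => (p.2, p.1)) (𝓝 x ×ˢ 𝓝[>] t) (𝓝 (t, x)) := by
    rw [nhds_prod_eq]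
    exact (tendsto_snd.mono_right nhdsWithin_le_nhds).prodMk tendsto_fst
  exact h.tendsto.comp h1

lemma lsc_add {l : Filter (ℝ × ℝ)} {f g : ℝ × ℝ → ℝ} {f0 g0 r : ℝ}
    (hf : ∀ r < f0, ∀ᶠ p in l, r < f p) (hg : Tendsto g l (𝓝 g0)) (hr : r < f0 + g0) :
    ∀ᶠ p in l, r < f p + g p := by
  have h1 := hf (f0 - (f0 + g0 - r) / 2) (by linarith)
  have h2 := hg.eventually (lt_mem_nhds (show g0 - (f0 + g0 - r) / 2 < g0 by linarith))
  filter_upwards [h1, h2] with p h1 h2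
  linarith

/-- Lower bound on a box whose parabolic boundary values are at least `L`; the corner values
are only known separately. -/
lemma box_step {ν a : ℝ → ℝ} {W m₀ M₀ n₀ : ℝ} (hνc : Continuous ν) (hac : Continuous a)
    (hν : ∀ x, 0 < ν x) (ha : ∀ x, 0 < a x) (hm₀ : 0 < m₀) (hn₀ : 0 < n₀)
    (hm : ∀ x, m₀ ≤ ν x * ν x * a x) (hM : ∀ x, ν x * ν x * a x ≤ M₀)
    (hn : ∀ x, n₀ ≤ ν x * a x) {u ut ux q : ℝ → ℝ → ℝ} {c d α β L : ℝ}
    (hcd : c < d) (hαβ : α < β) (hL : 0 ≤ L) (hW : |W| * (β - α) ≤ n₀ / 2)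
    (hu : ∀ t ∈ Icc c d, ∀ x ∈ Icc α β, 0 ≤ u t x)
    (hsol : ∀ t ∈ Ioc c d, ∀ x : ℝ, HasDerivAt (fun τ => u τ x) (ut t x) t ∧
      HasDerivAt (fun ξ => u t ξ) (ux t x) x ∧
      HasDerivAt (fun ξ => ν ξ * a ξ * ux t ξ) (q t x) x ∧
      ν x * ut t x - q t x + W * ux t x = 0)
    (hrow : ∀ x ∈ Icc α β, L ≤ u c x)
    (hside : ∀ t ∈ Icc c d, L ≤ u t α ∧ L ≤ u t β)
    (hFL : ∀ t ∈ Ico c d, ∀ x ∈ Icc α β, (t = c → x ∈ Ioo α β) → FutureLsc u t x) :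
    ∀ x ∈ Icc α β, L ≤ u d x := by
  intro x hx
  have hM₀ : 0 < M₀ := hm₀.trans_le ((hm 0).trans (hM 0))
  have main : ∀ ε > 0, L * (1 - 2 * Real.exp (-(m₀ / 4 / M₀) * Real.log ((d - c + ε) / ε)))
      - ε * (d - c) ≤ u d x := by
    intro ε hε
    obtain ⟨K, Kt, Kx, Kq, k1, k2, k3, k4, k5⟩ :=
      corner_barrier (W := W) hνc hac hν ha hm₀ hn₀ hm hM hn c α ε hε
    obtain ⟨K', Kt', Kx', Kq', k1', k2', k3', k4', k5'⟩ :=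
      corner_barrier (W := W) hνc hac hν ha hm₀ hn₀ hm hM hn c β ε hε
    have hlim : ∀ t, c ≤ t → ∀ x, Tendsto (fun p : ℝ × ℝ =>
        -L + L * (K p.2 p.1 + K' p.2 p.1) + ε * (p.2 - c)) (𝓝 x ×ˢ 𝓝[>] t)
        (𝓝 (-L + L * (K t x + K' t x) + ε * (t - c))) := by
      intro t ht x
      have h1 := tendsto_swap_of_continuousAt (k3 t ht x)
      have h2 := tendsto_swap_of_continuousAt (k3' t ht x)
      have h3 : Tendsto (fun p : ℝ × ℝ => p.2) (𝓝 x ×ˢ 𝓝[>] t) (𝓝 t) :=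
        tendsto_snd.mono_right nhdsWithin_le_nhds
      exact ((h1.add h2).const_mul L |>.const_add (-L)).add ((h3.sub_const c).const_mul ε)
    have hp := min_principle (W := W) (c := c) (d := d) (α := α) (β := β) hν ha
      (fun t x => u t x + (-L + L * (K t x + K' t x) + ε * (t - c)))
      (fun t x => ut t x + (L * (Kt t x + Kt' t x) + ε))
      (fun t x => ux t x + L * (Kx t x + Kx' t x))
      (fun t x => q t x + L * (Kq t x + Kq' t x)) ?_ ?_ ?_ ?_ ?_ d ⟨hcd, le_rfl⟩ x hx
    · have e1 := (k4 d x).resolve_right (not_lt.2 hcd.le)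
      have e2 := (k4' d x).resolve_right (not_lt.2 hcd.le)
      have := mul_le_mul_of_nonneg_left (add_le_add e1 e2) hL
      linarith
    · intro t ht x hx
      obtain ⟨s1, s2, s3, s4⟩ := hsol t ht x
      have hWx : |W| * |x - α| ≤ n₀ / 2 := by
        refine le_trans ?_ hW
        gcongr
        rw [abs_of_pos (by linarith [hx.1])]; linarith [hx.2]
      have hWx' : |W| * |x - β| ≤ n₀ / 2 := by
        refine le_trans ?_ hW
        gcongr
        rw [abs_of_neg (by linarith [hx.2])]; linarith [hx.1]
      obtain ⟨a1, a2, a3, a4⟩ := k5 t ht.1.le x hWx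
      obtain ⟨b1, b2, b3, b4⟩ := k5' t ht.1.le x hWx'
      refine ⟨?_, ?_, ?_, ?_⟩
      · have := s1.add ((((a1.add b1).const_mul L).const_add (-L)).add
          (((hasDerivAt_id t).sub_const c).const_mul ε))
        refine this.congr_deriv (by ring)
      · have := s2.add ((((a2.add b2).const_mul L).const_add (-L)).add_const (ε * (t - c)))
        exact this
      · have := s3.add ((a3.add b3).const_mul L)
        refine this.congr_of_eventuallyEq (Eventually.of_forall fun ξ => ?_)
        simp only [Pi.add_apply]
        ring
      · have := mul_nonneg hL (add_nonneg a4 b4)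
        have h2 := mul_pos (hν x) hε
        linarith
    · intro t ht
      have hKc : Continuous (K t) := continuous_iff_continuousAt.2 fun x =>
        (k3 t ht.1.le x).comp (f := fun x => (t, x)) (by fun_prop)
      have hKc' : Continuous (K' t) := continuous_iff_continuousAt.2 fun x =>
        (k3' t ht.1.le x).comp (f := fun x => (t, x)) (by fun_prop)
      have huc : Continuous (u t) := continuous_iff_continuousAt.2 fun x =>
        (hsol t ht x).2.1.continuousAt
      fun_prop
    · intro t ht
      have h1 := hside t ⟨ht.1.le, ht.2⟩
      have h2 := mul_nonneg hL (add_nonneg (k1 t α) (k1' t α))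
      have h3 := mul_nonneg hL (add_nonneg (k1 t β) (k1' t β))
      have h4 := mul_nonneg hε.le (sub_nonneg.2 ht.1.le)
      constructor <;> linarith [h1.1, h1.2]
    · intro t ht x hx r hr
      have := lsc_add (f := fun p => u p.2 p.1) (hFL t ⟨ht.1.le, ht.2⟩ x hx
        (fun h => absurd h ht.1.ne')) (hlim t ht.1.le x) hr
      filter_upwards [this] with p hp _ using hp
    · intro x hx r hr
      by_cases hxx : x ∈ Ioo α β
      · have := lsc_add (f := fun p => u p.2 p.1) (r := r) (hFL c ⟨le_rfl, hcd⟩ x hx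
          (fun h => hxx)) (hlim c le_rfl x) (by
            have := hrow x hx
            have h2 := mul_nonneg hL (add_nonneg (k1 c x) (k1' c x))
            linarith)
        filter_upwards [this] with p hp _ using hp
      · have h0 : (0 : ℝ) ≤ -L + L * (K c x + K' c x) + ε * (c - c) := by
          have hx' : x = α ∨ x = β := by
            by_contra! h
            exact hxx ⟨lt_of_le_of_ne hx.1 (Ne.symm h.1), lt_of_le_of_ne hx.2 h.2⟩
          rcases hx' with rfl | rfl
          · have := mul_nonneg hL (k1' c x)
            rw [k2]; linarith
          · have := mul_nonneg hL (k1 c x)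
            rw [k2']; linarith
        have h1 := (hlim c le_rfl x).eventually (lt_mem_nhds (hr.trans_le h0))
        have h2 : ∀ᶠ p : ℝ × ℝ in 𝓝 x ×ˢ 𝓝[>] c, p.2 ∈ Ioc c d :=
          tendsto_snd.eventually (Ioc_mem_nhdsGT hcd)
        filter_upwards [h1, h2] with p h1 h2 h3
        have := hu p.2 ⟨h2.1.le, h2.2⟩ p.1 h3
        linarith
  have hlim0 : Tendsto (fun ε => Real.exp (-(m₀ / 4 / M₀) * Real.log ((d - c + ε) / ε)))
      (𝓝[>] 0) (𝓝 0) := by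
    apply Real.tendsto_exp_atBot.comp
    apply Tendsto.const_mul_atTop_of_neg
    · have : 0 < m₀ / 4 / M₀ := by positivity
      linarith
    · apply Real.tendsto_log_atTop.comp
      have h1 : Tendsto (fun ε : ℝ => (d - c + ε)) (𝓝[>] 0) (𝓝 (d - c)) := by
        have : Tendsto (fun ε : ℝ => (d - c + ε)) (𝓝 0) (𝓝 (d - c + 0)) :=
          tendsto_const_nhds.add tendsto_id
        rw [add_zero] at this
        exact this.mono_left nhdsWithin_le_nhds
      simpa [div_eq_mul_inv] using h1.pos_mul_atTop (sub_pos.2 hcd) tendsto_inv_nhdsGT_zero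
  have hid : Tendsto (fun ε : ℝ => ε) (𝓝[>] 0) (𝓝 0) := tendsto_id.mono_left nhdsWithin_le_nhds
  have hfin := ((hlim0.const_mul 2).const_sub 1 |>.const_mul L).sub (hid.mul_const (d - c))
  have hL0 : L * (1 - 2 * 0) - 0 * (d - c) = L := by ring
  rw [hL0] at hfin
  refine le_of_tendsto hfin ?_
  filter_upwards [self_mem_nhdsWithin] with ε hε using main ε hε


/-- Pointwise Lipschitz points with constant and scale governed by `n`. -/
def LipPt (u : ℝ → ℝ → ℝ) (n : ℝ) (t x : ℝ) : Prop :=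
  (∀ s, 0 < s → |s - t| < 1 / n → |u s x - u t x| ≤ n * |s - t|) ∧
  (∀ ξ, |ξ - x| < 1 / n → |u t ξ - u t x| ≤ n * |ξ - x|)

/-- The local step: where the exceptional set consists of uniformly Lipschitz points,
future lower semicontinuity holds. -/
lemma local_step {ν a : ℝ → ℝ} {W m₀ M₀ n₀ : ℝ} (hνc : Continuous ν) (hac : Continuous a)
    (hν : ∀ x, 0 < ν x) (ha : ∀ x, 0 < a x) (hm₀ : 0 < m₀) (hn₀ : 0 < n₀)
    (hm : ∀ x, m₀ ≤ ν x * ν x * a x) (hM : ∀ x, ν x * ν x * a x ≤ M₀)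
    (hn : ∀ x, n₀ ≤ ν x * a x) {u ut ux q : ℝ → ℝ → ℝ}
    (hu : ∀ t, 0 < t → ∀ x, 0 ≤ u t x)
    (hsol : ∀ t, 0 < t → ∀ x : ℝ, HasDerivAt (fun τ => u τ x) (ut t x) t ∧
      HasDerivAt (fun ξ => u t ξ) (ux t x) x ∧
      HasDerivAt (fun ξ => ν ξ * a ξ * ux t ξ) (q t x) x ∧
      ν x * ut t x - q t x + W * ux t x = 0)
    {F U : Set (ℝ × ℝ)} (hF : IsClosed F) (hU : IsOpen U)
    (hFF : ∀ t x, 0 < t → (t, x) ∉ F → FutureLsc u t x) {n : ℝ} (hn1 : 1 ≤ n)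
    (hD : ∀ t x, 0 < t → (t, x) ∈ F → (t, x) ∈ U → LipPt u n t x)
    {tp xp : ℝ} (htp : 0 < tp) (hpF : (tp, xp) ∈ F) (hpU : (tp, xp) ∈ U) :
    FutureLsc u tp xp := by
  intro r hr
  rcases lt_or_ge r 0 with hr0 | hr0
  · have h2 : ∀ᶠ p : ℝ × ℝ in 𝓝 xp ×ˢ 𝓝[>] tp, p.2 ∈ Ioi tp :=
      tendsto_snd.eventually self_mem_nhdsWithin
    filter_upwards [h2] with p hp
    exact hr0.trans_le (hu _ (htp.trans hp) _)
  have hnpos : 0 < n := by linarith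
  -- choice of the scale
  obtain ⟨ρ, hρ, hρU, hρn, hρW, hρr⟩ : ∃ ρ > 0, (∀ t x, |t - tp| ≤ ρ → |x - xp| ≤ ρ → (t, x) ∈ U) ∧
      2 * ρ < 1 / n ∧ |W| * (2 * ρ) ≤ n₀ / 2 ∧ r < u tp xp - 6 * n * ρ := by
    obtain ⟨e, he, hball⟩ := Metric.isOpen_iff.1 hU _ hpU
    have c1 : ∀ᶠ ρ in 𝓝[>] (0:ℝ), ρ < e := nhdsWithin_le_nhds (gt_mem_nhds he)
    have c2 : ∀ᶠ ρ in 𝓝[>] (0:ℝ), 2 * ρ < 1 / n := by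
      have : ContinuousAt (fun ρ : ℝ => 2 * ρ) 0 := by fun_prop
      exact nhdsWithin_le_nhds (this.eventually_lt_const (by simpa using hnpos))
    have c3 : ∀ᶠ ρ in 𝓝[>] (0:ℝ), |W| * (2 * ρ) < n₀ / 2 := by
      have : ContinuousAt (fun ρ : ℝ => |W| * (2 * ρ)) 0 := by fun_prop
      exact nhdsWithin_le_nhds (this.eventually_lt_const (by simpa using hn₀))
    have c4 : ∀ᶠ ρ in 𝓝[>] (0:ℝ), r < u tp xp - 6 * n * ρ := by
      have : ContinuousAt (fun ρ : ℝ => u tp xp - 6 * n * ρ) 0 := by fun_prop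
      exact nhdsWithin_le_nhds (this.eventually_const_lt (by simpa using hr))
    obtain ⟨ρ, ⟨h1, h2, h3, h4⟩, h5⟩ :=
      ((c1.and (c2.and (c3.and c4))).and self_mem_nhdsWithin).exists
    refine ⟨ρ, h5, fun t x ht hx => hball ?_, h2, h3.le, h4⟩
    rw [Metric.mem_ball, Prod.dist_eq, Real.dist_eq, Real.dist_eq]
    exact max_lt (ht.trans_lt h1) (hx.trans_lt h1)
  set L := u tp xp - 6 * n * ρ with hLdef
  have hnρ : 0 < n * ρ := mul_pos hnpos hρ
  obtain ⟨-, hprow⟩ := hD tp xp htp hpF hpU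
  have hrow0 : ∀ x, |x - xp| ≤ ρ → u tp xp - n * ρ ≤ u tp x := by
    intro x hx
    have h1 := hprow x (by linarith)
    have h2 : n * |x - xp| ≤ n * ρ := by gcongr
    linarith [(abs_le.1 h1).1]
  obtain ⟨τ, hτ, hτρ, hτs⟩ : ∃ τ > 0, τ ≤ ρ ∧ ∀ t ∈ Icc tp (tp + τ),
      u tp xp - 2 * n * ρ ≤ u t (xp - ρ) ∧ u tp xp - 2 * n * ρ ≤ u t (xp + ρ) := by
    have e1 := (hsol tp htp (xp - ρ)).1.continuousAt.eventually_const_lt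
      (show u tp xp - 2 * n * ρ < u tp (xp - ρ) by
        have := hrow0 (xp - ρ) (by rw [sub_sub_cancel_left, abs_neg, abs_of_pos hρ])
        linarith)
    have e2 := (hsol tp htp (xp + ρ)).1.continuousAt.eventually_const_lt
      (show u tp xp - 2 * n * ρ < u tp (xp + ρ) by
        have := hrow0 (xp + ρ) (by rw [add_sub_cancel_left, abs_of_pos hρ])
        linarith)
    obtain ⟨e, he, hball⟩ := Metric.eventually_nhds_iff.1 (e1.and e2)
    refine ⟨min (e / 2) ρ, by positivity, min_le_right _ _, fun t ht => ?_⟩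
    have : dist t tp < e := by
      rw [Real.dist_eq, abs_of_nonneg (by linarith [ht.1])]
      have := min_le_left (e / 2) ρ
      linarith [ht.2]
    exact ⟨(hball this).1.le, (hball this).2.le⟩
  have claim : ∀ t₁ ∈ Ioc tp (tp + τ), ∀ x₁ ∈ Icc (xp - ρ) (xp + ρ), L ≤ u t₁ x₁ := by
    intro t₁ ht₁ x₁ hx₁
    set Q : Set (ℝ × ℝ) := Icc tp (tp + τ) ×ˢ Icc (xp - ρ) (xp + ρ)
    have hQ : IsCompact Q := isCompact_Icc.prod isCompact_Icc
    have hE : IsCompact (F ∩ Q) := hQ.inter_left hF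
    have hLip : ∀ t x, (t, x) ∈ F ∩ Q → LipPt u n t x ∧ u tp xp - 4 * n * ρ ≤ u t x := by
      rintro t x ⟨hf, hq⟩
      have ht : t ∈ Icc tp (tp + τ) := hq.1
      have hx : x ∈ Icc (xp - ρ) (xp + ρ) := hq.2
      have hl := hD t x (htp.trans_le ht.1) hf
        (hρU t x (abs_le.2 ⟨by linarith [ht.1], by linarith [ht.2]⟩)
          (abs_le.2 ⟨by linarith [hx.1], by linarith [hx.2]⟩))
      refine ⟨hl, ?_⟩
      have hd : |xp + ρ - x| ≤ 2 * ρ := abs_le.2 ⟨by linarith [hx.2], by linarith [hx.1]⟩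
      have h1 := hl.2 (xp + ρ) (by linarith)
      have h2 : n * |xp + ρ - x| ≤ n * (2 * ρ) := by gcongr
      linarith [(abs_le.1 h1).2, (hτs t ht).2]
    have hcol : ∀ t x, (t, x) ∈ F ∩ Q → ∀ s ∈ Icc tp (tp + τ), L ≤ u s x := by
      intro t x hq s hs
      obtain ⟨hl, hge⟩ := hLip t x hq
      have ht : t ∈ Icc tp (tp + τ) := hq.2.1
      have hd : |s - t| ≤ ρ := abs_le.2 ⟨by linarith [ht.2, hs.1], by linarith [ht.1, hs.2]⟩
      have h1 := hl.1 s (htp.trans_le hs.1) (by linarith)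
      have h2 : n * |s - t| ≤ n * ρ := by gcongr
      linarith [(abs_le.1 h1).1]
    have hrow : ∀ t x, (t, x) ∈ F ∩ Q → ∀ ξ ∈ Icc (xp - ρ) (xp + ρ), L ≤ u t ξ := by
      intro t x hq ξ hξ
      obtain ⟨hl, hge⟩ := hLip t x hq
      have hx : x ∈ Icc (xp - ρ) (xp + ρ) := hq.2.2
      have hd : |ξ - x| ≤ 2 * ρ := abs_le.2 ⟨by linarith [hx.2, hξ.1], by linarith [hx.1, hξ.2]⟩
      have h1 := hl.2 ξ (by linarith)
      have h2 : n * |ξ - x| ≤ n * (2 * ρ) := by gcongr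
      linarith [(abs_le.1 h1).1]
    set Kc : Set ℝ := Prod.snd '' (F ∩ Q) ∪ {xp - ρ, xp + ρ}
    have hKc : IsCompact Kc := (hE.image continuous_snd).union
      (Set.toFinite {xp - ρ, xp + ρ}).isCompact
    have hKcol : ∀ x ∈ Kc, ∀ s ∈ Icc tp (tp + τ), L ≤ u s x := by
      rintro x (⟨⟨t, x⟩, hq, rfl⟩ | rfl | rfl) s hs
      · exact hcol t x hq s hs
      · linarith [(hτs s hs).1]
      · have h := (hτs s hs).2; linarith
    by_cases hx₁K : x₁ ∈ Kc
    · exact hKcol x₁ hx₁K t₁ ⟨ht₁.1.le, ht₁.2⟩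
    obtain ⟨α, ⟨hαK, hαx⟩, hαmax⟩ := (hKc.inter_right isClosed_Iic).exists_isGreatest
      (⟨xp - ρ, Or.inr (Or.inl rfl), hx₁.1⟩ : (Kc ∩ Iic x₁).Nonempty)
    obtain ⟨β, ⟨hβK, hβx⟩, hβmin⟩ := (hKc.inter_right isClosed_Ici).exists_isLeast
      (⟨xp + ρ, Or.inr (Or.inr rfl), hx₁.2⟩ : (Kc ∩ Ici x₁).Nonempty)
    have hα1 : xp - ρ ≤ α := hαmax ⟨Or.inr (Or.inl rfl), hx₁.1⟩
    have hβ1 : β ≤ xp + ρ := hβmin ⟨Or.inr (Or.inr rfl), hx₁.2⟩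
    have hαx' : α < x₁ := lt_of_le_of_ne hαx (by rintro rfl; exact hx₁K hαK)
    have hβx' : x₁ < β := lt_of_le_of_ne hβx (by rintro rfl; exact hx₁K hβK)
    set E2 : Set (ℝ × ℝ) := (F ∩ Q) ∩ (Iic t₁ ×ˢ Icc α β)
    have hE2 : IsCompact E2 := hE.inter_right (isClosed_Iic.prod isClosed_Icc)
    obtain ⟨c, hcR, hcmax⟩ := ((hE2.image continuous_fst).union
      (isCompact_singleton (x := tp))).exists_isGreatest ⟨tp, Or.inr rfl⟩
    have hctp : tp ≤ c := hcmax (Or.inr rfl)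
    have hct₁ : c ≤ t₁ := by
      rcases hcR with ⟨⟨t, x⟩, hq, rfl⟩ | h
      · exact hq.2.1
      · rw [mem_singleton_iff.1 h]; exact ht₁.1.le
    have hcrow : ∀ ξ ∈ Icc (xp - ρ) (xp + ρ), L ≤ u c ξ := by
      rcases hcR with ⟨⟨t, x⟩, hq, rfl⟩ | h
      · exact hrow t x hq.1
      · intro ξ hξ
        rw [mem_singleton_iff.1 h]
        have := hrow0 ξ (abs_le.2 ⟨by linarith [hξ.1], by linarith [hξ.2]⟩)
        linarith
    rcases hct₁.eq_or_lt with h | hlt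
    · rw [← h]; exact hcrow x₁ hx₁
    refine box_step (W := W) hνc hac hν ha hm₀ hn₀ hm hM hn (ut := ut) (ux := ux) (q := q)
      hlt (hαx'.trans hβx') (hr0.trans hρr.le) ?_ ?_ ?_ ?_ ?_ ?_ x₁ ⟨hαx, hβx⟩
    · refine le_trans ?_ hρW
      gcongr
      linarith
    · intro t ht x _
      exact hu t (htp.trans_le (hctp.trans ht.1)) x
    · intro t ht x
      exact hsol t (htp.trans_le (hctp.trans ht.1.le)) x
    · intro x hx
      exact hcrow x ⟨hα1.trans hx.1, hx.2.trans hβ1⟩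
    · intro t ht
      have : t ∈ Icc tp (tp + τ) := ⟨hctp.trans ht.1, ht.2.trans ht₁.2⟩
      exact ⟨hKcol α hαK t this, hKcol β hβK t this⟩
    · intro t ht x hx hh
      refine hFF t x (htp.trans_le (hctp.trans ht.1)) fun hf => ?_
      have hq : (t, x) ∈ F ∩ Q := ⟨hf, ⟨hctp.trans ht.1, ht.2.le.trans ht₁.2⟩,
        ⟨hα1.trans hx.1, hx.2.trans hβ1⟩⟩
      have htc : t ≤ c := hcmax (Or.inl ⟨(t, x), ⟨hq, ht.2.le, hx⟩, rfl⟩)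
      have hx' := hh (le_antisymm htc ht.1)
      have hxK : x ∈ Kc := Or.inl ⟨(t, x), hq, rfl⟩
      rcases le_total x x₁ with h | h
      · exact absurd (hαmax ⟨hxK, h⟩) (not_le.2 hx'.1)
      · exact absurd (hβmin ⟨hxK, h⟩) (not_le.2 hx'.2)
  have h1 : ∀ᶠ p : ℝ × ℝ in 𝓝 xp ×ˢ 𝓝[>] tp, p.1 ∈ Icc (xp - ρ) (xp + ρ) :=
    tendsto_fst.eventually (Icc_mem_nhds (by linarith) (by linarith))
  have h2 : ∀ᶠ p : ℝ × ℝ in 𝓝 xp ×ˢ 𝓝[>] tp, p.2 ∈ Ioc tp (tp + τ) :=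
    tendsto_snd.eventually (Ioc_mem_nhdsGT (by linarith))
  filter_upwards [h1, h2] with p h1 h2
  exact hρr.trans_le (claim _ h2 _ h1)


lemma lipPt_closed {u : ℝ → ℝ → ℝ} {n : ℝ} (hn : 0 < n)
    (huc : ∀ t, 0 < t → ∀ x, ContinuousAt (fun s => u s x) t)
    (hur : ∀ t, 0 < t → Continuous (u t)) {tk xk : ℕ → ℝ} {t x : ℝ} (ht : 0 < t)
    (htk : Tendsto tk atTop (𝓝 t)) (hxk : Tendsto xk atTop (𝓝 x))
    (hk : ∀ k, LipPt u n (tk k) (xk k)) : LipPt u n t x := by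
  have hval : Tendsto (fun k => u (tk k) (xk k)) atTop (𝓝 (u t x)) := by
    have h1 : Tendsto (fun k => u (tk k) x) atTop (𝓝 (u t x)) := (huc t ht x).tendsto.comp htk
    have h2 : Tendsto (fun k => n * |x - xk k|) atTop (𝓝 0) := by
      have : Tendsto (fun k => n * |x - xk k|) atTop (𝓝 (n * |x - x|)) :=
        ((hxk.const_sub x).abs).const_mul n
      simpa using this
    have h3 : Tendsto (fun k => u (tk k) x - u (tk k) (xk k)) atTop (𝓝 0) := by
      refine squeeze_zero_norm' ?_ h2
      have : ∀ᶠ k in atTop, |x - xk k| < 1 / n := by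
        have h : Tendsto (fun k => |x - xk k|) atTop (𝓝 |x - x|) := (hxk.const_sub x).abs
        exact h.eventually_lt_const (by simpa using hn)
      filter_upwards [this] with k hk'
      exact (hk k).2 x hk'
    have := h1.sub h3
    simpa using this
  constructor
  · intro s hs hst
    have h1 : Tendsto (fun k => |s - tk k|) atTop (𝓝 |s - t|) := (htk.const_sub s).abs
    have h2 : Tendsto (fun k => u s (xk k)) atTop (𝓝 (u s x)) :=
      ((hur s hs).tendsto x).comp hxk
    refine le_of_tendsto_of_tendsto (h2.sub hval).abs (h1.const_mul n) ?_
    filter_upwards [h1.eventually_lt_const hst] with k hk'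
    exact (hk k).1 s hs hk'
  · intro ξ hξ
    have h1 : Tendsto (fun k => |ξ - xk k|) atTop (𝓝 |ξ - x|) := (hxk.const_sub ξ).abs
    have h2 : Tendsto (fun k => u (tk k) ξ) atTop (𝓝 (u t ξ)) := (huc t ht ξ).tendsto.comp htk
    refine le_of_tendsto_of_tendsto (h2.sub hval).abs (h1.const_mul n) ?_
    filter_upwards [h1.eventually_lt_const hξ] with k hk'
    exact (hk k).2 ξ hk'

lemma exists_lip {f : ℝ → ℝ} {f' x : ℝ} (h : HasDerivAt f f' x) :
    ∃ N : ℕ, ∀ n : ℕ, N ≤ n → ∀ s, |s - x| < 1 / (n + 1 : ℝ) → |f s - f x| ≤ (n + 1 : ℝ) * |s - x| := by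
  obtain ⟨C, hC⟩ := h.isBigO_sub.bound
  obtain ⟨e, he, hball⟩ := Metric.eventually_nhds_iff.1 hC
  obtain ⟨N1, hN1⟩ := exists_nat_gt C
  obtain ⟨N2, hN2⟩ := exists_nat_one_div_lt he
  refine ⟨max N1 N2, fun n hn s hs => ?_⟩
  have hn1 : (N1 : ℝ) ≤ n := by exact_mod_cast (le_max_left _ _).trans hn
  have hn2 : (N2 : ℝ) ≤ n := by exact_mod_cast (le_max_right _ _).trans hn
  have h1 : (1 : ℝ) / (n + 1) ≤ 1 / (N2 + 1) := by
    apply one_div_le_one_div_of_le <;> [positivity; linarith]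
  have := hball (show dist s x < e by rw [Real.dist_eq]; linarith)
  rw [Real.norm_eq_abs, Real.norm_eq_abs] at this
  refine this.trans ?_
  gcongr
  linarith

/-- Nonnegative pointwise classical solutions are lower semicontinuous in the future direction. -/
theorem future_lsc {ν a : ℝ → ℝ} {W m₀ M₀ n₀ : ℝ} (hνc : Continuous ν) (hac : Continuous a)
    (hν : ∀ x, 0 < ν x) (ha : ∀ x, 0 < a x) (hm₀ : 0 < m₀) (hn₀ : 0 < n₀)
    (hm : ∀ x, m₀ ≤ ν x * ν x * a x) (hM : ∀ x, ν x * ν x * a x ≤ M₀)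
    (hn : ∀ x, n₀ ≤ ν x * a x) {u ut ux q : ℝ → ℝ → ℝ}
    (hu : ∀ t, 0 < t → ∀ x, 0 ≤ u t x)
    (hsol : ∀ t, 0 < t → ∀ x : ℝ, HasDerivAt (fun τ => u τ x) (ut t x) t ∧
      HasDerivAt (fun ξ => u t ξ) (ux t x) x ∧
      HasDerivAt (fun ξ => ν ξ * a ξ * ux t ξ) (q t x) x ∧
      ν x * ut t x - q t x + W * ux t x = 0) :
    ∀ t, 0 < t → ∀ x, FutureLsc u t x := by
  set G : Set (ℝ × ℝ) := interior {p | FutureLsc u p.1 p.2}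
  set Ω : Set (ℝ × ℝ) := {p | 0 < p.1}
  have hΩ : IsOpen Ω := isOpen_lt continuous_const continuous_fst
  have hFF : ∀ t x, 0 < t → (t, x) ∉ Gᶜ → FutureLsc u t x := fun t x _ h => by
    have h1 : (t, x) ∈ G := not_not.1 h
    exact interior_subset h1
  set E : Set (ℝ × ℝ) := Ω ∩ Gᶜ
  suffices hemp : ¬ E.Nonempty by
    intro t ht x
    apply hFF t x ht
    intro h
    exact hemp ⟨(t, x), ht, h⟩
  intro hne
  have hlc : IsLocallyClosed E := ⟨Ω, Gᶜ, hΩ, isOpen_interior.isClosed_compl, rfl⟩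
  have := hlc.locallyCompactSpace
  have : Nonempty E := hne.to_subtype
  let D : ℕ → Set E := fun n => {p | LipPt u (n + 1) p.1.1 p.1.2}
  have huc : ∀ t, 0 < t → ∀ x, ContinuousAt (fun s => u s x) t :=
    fun t ht x => (hsol t ht x).1.continuousAt
  have hur : ∀ t, 0 < t → Continuous (u t) := fun t ht =>
    continuous_iff_continuousAt.2 fun x => (hsol t ht x).2.1.continuousAt
  have hDc : ∀ n, IsClosed (D n) := by
    intro n
    apply IsSeqClosed.isClosed
    intro pk p hpk hp
    have hp' : Tendsto (fun k => (pk k : ℝ × ℝ)) atTop (𝓝 (p : ℝ × ℝ)) :=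
      (continuous_subtype_val.tendsto p).comp hp
    exact lipPt_closed (by positivity) huc hur p.2.1 ((continuous_fst.tendsto _).comp hp')
      ((continuous_snd.tendsto _).comp hp') hpk
  have hDu : ⋃ n, D n = univ := by
    refine eq_univ_of_forall fun p => ?_
    obtain ⟨h1, h2, -⟩ := hsol p.1.1 p.2.1 p.1.2
    obtain ⟨N1, hN1⟩ := exists_lip h1
    obtain ⟨N2, hN2⟩ := exists_lip h2
    refine mem_iUnion.2 ⟨max N1 N2, ?_⟩
    exact ⟨fun s _ hs => hN1 _ (le_max_left _ _) s hs, fun s hs => hN2 _ (le_max_right _ _) s hs⟩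
  obtain ⟨n, p, hp⟩ := nonempty_interior_of_iUnion_of_closed hDc hDu
  obtain ⟨U, hU, hUeq⟩ := isOpen_induced_iff.1 (isOpen_interior (s := D n))
  have hpU : (p : ℝ × ℝ) ∈ U := by
    have : p ∈ Subtype.val ⁻¹' U := by rw [hUeq]; exact hp
    exact this
  have hDU : ∀ t x, 0 < t → (t, x) ∈ Gᶜ → (t, x) ∈ U → LipPt u (n + 1) t x := by
    intro t x ht hG hUx
    have : (⟨(t, x), ht, hG⟩ : E) ∈ Subtype.val ⁻¹' U := hUx
    rw [hUeq] at this
    have h2 := interior_subset this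
    exact h2
  have hall : ∀ t x, 0 < t → (t, x) ∈ U → FutureLsc u t x := by
    intro t x ht hUx
    by_cases hG : (t, x) ∈ Gᶜ
    · exact local_step (W := W) hνc hac hν ha hm₀ hn₀ hm hM hn hu hsol
        isOpen_interior.isClosed_compl hU hFF (n := n + 1) (by linarith [n.cast_nonneg (α := ℝ)])
        hDU ht hG hUx
    · exact hFF t x ht hG
  have : (p : ℝ × ℝ) ∈ G := by
    refine mem_interior.2 ⟨U ∩ Ω, fun z hz => hall z.1 z.2 hz.2 hz.1, hU.inter hΩ, hpU, p.2.1⟩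
  exact p.2.2 this


/-- Comparison of a nonnegative solution with an approximate subsolution vanishing at the sides. -/
lemma comparison {ν a : ℝ → ℝ} {W : ℝ} (hν : ∀ x, 0 < ν x) (ha : ∀ x, 0 < a x)
    {u ut ux q : ℝ → ℝ → ℝ}
    (hu : ∀ t, 0 < t → ∀ x, 0 ≤ u t x)
    (hsol : ∀ t, 0 < t → ∀ x : ℝ, HasDerivAt (fun τ => u τ x) (ut t x) t ∧
      HasDerivAt (fun ξ => u t ξ) (ux t x) x ∧
      HasDerivAt (fun ξ => ν ξ * a ξ * ux t ξ) (q t x) x ∧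
      ν x * ut t x - q t x + W * ux t x = 0)
    (hFL : ∀ t, 0 < t → ∀ x, FutureLsc u t x)
    {s τ α β ε e : ℝ} (hs : 0 < s) (hε : 0 ≤ ε) (he : 0 < e) {w wt wx h : ℝ → ℝ → ℝ}
    (hwc : Continuous (fun p : ℝ × ℝ => w p.1 p.2))
    (hw : ∀ t, 0 ≤ t → ∀ x ∈ Ioo α β, HasDerivAt (fun σ => w σ x) (wt t x) t ∧
      HasDerivAt (w t) (wx t x) x ∧
      HasDerivAt (fun ξ => ν ξ * a ξ * wx t ξ) (W * wx t x + ν x * h t x) x ∧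
      wt t x - h t x < e)
    (hws : ∀ t, 0 ≤ t → w t α ≤ 0 ∧ w t β ≤ 0)
    (hw0 : ∀ x ∈ Icc α β, w 0 x ≤ u s x + ε) :
    ∀ t ∈ Ioc 0 τ, ∀ x ∈ Icc α β, w t x - ε - e * t ≤ u (s + t) x := by
  intro t ht x hx
  have hlim : ∀ t x, Tendsto (fun p : ℝ × ℝ => - w p.2 p.1 + (ε + e * p.2)) (𝓝 x ×ˢ 𝓝[>] t)
      (𝓝 (- w t x + (ε + e * t))) := by
    intro t x
    have h : Continuous (fun p : ℝ × ℝ => - w p.1 p.2 + (ε + e * p.1)) := by fun_prop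
    exact tendsto_swap_of_continuousAt (K := fun t x => - w t x + (ε + e * t)) h.continuousAt
  have hFL' : ∀ t, 0 ≤ t → ∀ x, ∀ r < u (s + t) x,
      ∀ᶠ p : ℝ × ℝ in 𝓝 x ×ˢ 𝓝[>] t, r < u (s + p.2) p.1 := by
    intro t ht x r hr
    have h1 := hFL (s + t) (by linarith) x r hr
    have h2 : Tendsto (fun p : ℝ × ℝ => (p.1, s + p.2)) (𝓝 x ×ˢ 𝓝[>] t)
        (𝓝 x ×ˢ 𝓝[>] (s + t)) := by
      refine tendsto_fst.prodMk (Tendsto.comp (g := fun r => s + r) ?_ tendsto_snd)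
      refine tendsto_nhdsWithin_of_tendsto_nhds_of_eventually_within _ ?_ ?_
      · exact (Continuous.tendsto (by fun_prop) t).mono_left nhdsWithin_le_nhds
      · filter_upwards [self_mem_nhdsWithin] with r hr
        exact add_lt_add_right (mem_Ioi.1 hr) s
    exact h2.eventually h1
  have hp := min_principle (W := W) (c := 0) (d := τ) (α := α) (β := β) hν ha
      (fun t x => u (s + t) x + (- w t x + (ε + e * t)))
      (fun t x => ut (s + t) x + (- wt t x + e))
      (fun t x => ux (s + t) x - wx t x)
      (fun t x => q (s + t) x - (W * wx t x + ν x * h t x)) ?_ ?_ ?_ ?_ ?_ t ht x hx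
  · linarith
  · intro t ht x hx
    obtain ⟨s1, s2, s3, s4⟩ := hsol (s + t) (by linarith [ht.1]) x
    obtain ⟨w1, w2, w3, w4⟩ := hw t ht.1.le x hx
    refine ⟨?_, ?_, ?_, ?_⟩
    · have h1 : HasDerivAt (fun t => u (s + t) x) (ut (s + t) x) t := by
        exact s1.comp_const_add s t
      have := h1.add (w1.neg.add (((hasDerivAt_id t).const_mul e).const_add ε))
      refine this.congr_deriv (by ring)
    · have := s2.add (w2.neg.add_const (ε + e * t))
      exact this
    · have := s3.sub w3
      refine this.congr_of_eventuallyEq (Eventually.of_forall fun ξ => ?_)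
      simp only [Pi.sub_apply]
      ring
    · have := mul_pos (hν x) (sub_pos.2 w4)
      linarith
  · intro t ht
    have h1 : Continuous (w t) := hwc.comp (f := fun x => (t, x)) (by fun_prop)
    have h2 : Continuous (u (s + t)) := continuous_iff_continuousAt.2 fun x =>
        (hsol (s + t) (by linarith [ht.1]) x).2.1.continuousAt
    fun_prop
  · intro t ht
    have h1 := hws t ht.1.le
    have h2 := mul_nonneg he.le ht.1.le
    have h3 := hu (s + t) (by linarith [ht.1])
    constructor <;> linarith [h1.1, h1.2, h3 α, h3 β]
  · intro t ht x hx r hr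
    have := lsc_add (f := fun p => u (s + p.2) p.1) (hFL' t ht.1.le x) (hlim t x) hr
    filter_upwards [this] with p hp _ using hp
  · intro x hx r hr
    have := lsc_add (f := fun p => u (s + p.2) p.1) (r := r) (hFL' 0 le_rfl x) (hlim 0 x) (by
      have := hw0 x hx
      rw [add_zero, mul_zero]
      linarith)
    filter_upwards [this] with p hp _ using hp

/-- Almost nonnegativity of approximate solutions with nonnegative initial data. -/
lemma almost_nonneg {ν a : ℝ → ℝ} {W : ℝ} (hν : ∀ x, 0 < ν x) (ha : ∀ x, 0 < a x)
    {τ α β ε e : ℝ} (hε : 0 ≤ ε) (he : 0 < e) {w wt wx h : ℝ → ℝ → ℝ}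
    (hwc : Continuous (fun p : ℝ × ℝ => w p.1 p.2))
    (hw : ∀ t, 0 ≤ t → ∀ x ∈ Ioo α β, HasDerivAt (fun σ => w σ x) (wt t x) t ∧
      HasDerivAt (w t) (wx t x) x ∧
      HasDerivAt (fun ξ => ν ξ * a ξ * wx t ξ) (W * wx t x + ν x * h t x) x ∧
      h t x - wt t x < e)
    (hws : ∀ t, 0 ≤ t → 0 ≤ w t α ∧ 0 ≤ w t β)
    (hw0 : ∀ x ∈ Icc α β, - ε ≤ w 0 x) :
    ∀ t ∈ Ioc 0 τ, ∀ x ∈ Icc α β, - ε - e * t ≤ w t x := by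
  intro t ht x hx
  have hlim : ∀ t x, Tendsto (fun p : ℝ × ℝ => w p.2 p.1 + (ε + e * p.2)) (𝓝 x ×ˢ 𝓝[>] t)
      (𝓝 (w t x + (ε + e * t))) := by
    intro t x
    have h : Continuous (fun p : ℝ × ℝ => w p.1 p.2 + (ε + e * p.1)) := by fun_prop
    exact tendsto_swap_of_continuousAt (K := fun t x => w t x + (ε + e * t)) h.continuousAt
  have hp := min_principle (W := W) (c := 0) (d := τ) (α := α) (β := β) hν ha
      (fun t x => w t x + (ε + e * t)) (fun t x => wt t x + e) (fun t x => wx t x)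
      (fun t x => W * wx t x + ν x * h t x) ?_ ?_ ?_ ?_ ?_ t ht x hx
  · linarith
  · intro t ht x hx
    obtain ⟨w1, w2, w3, w4⟩ := hw t ht.1.le x hx
    refine ⟨?_, w2.add_const _, w3, ?_⟩
    · have := w1.add (((hasDerivAt_id t).const_mul e).const_add ε)
      refine this.congr_deriv (by ring)
    · have := mul_pos (hν x) (sub_pos.2 w4)
      linarith
  · intro t ht
    have h1 : Continuous (w t) := hwc.comp (f := fun x => (t, x)) (by fun_prop)
    fun_prop
  · intro t ht
    have h1 := hws t ht.1.le
    have h2 := mul_nonneg he.le ht.1.le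
    constructor <;> linarith [h1.1, h1.2]
  · intro t ht x hx r hr
    filter_upwards [(hlim t x).eventually (lt_mem_nhds hr)] with p hp _ using hp
  · intro x hx r hr
    have h0 : r < w 0 x + (ε + e * 0) := by
      have := hw0 x hx
      linarith
    filter_upwards [(hlim 0 x).eventually (lt_mem_nhds h0)] with p hp _ using hp


lemma hasDerivAt_primitive {f : ℝ → ℝ} (hf : Continuous f) (α x : ℝ) :
    HasDerivAt (fun y => ∫ s in α..y, f s) (f x) x :=
  intervalIntegral.integral_hasDerivAt_right (hf.intervalIntegrable _ _)
    hf.aestronglyMeasurable.stronglyMeasurableAtFilter hf.continuousAt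

lemma continuous_primitive' {f : ℝ → ℝ} (hf : Continuous f) (α : ℝ) :
    Continuous (fun y => ∫ s in α..y, f s) :=
  continuous_iff_continuousAt.2 fun x => (hasDerivAt_primitive hf α x).continuousAt

lemma abs_primitive_le {f : ℝ → ℝ} {α β B : ℝ} 
    (hB : ∀ s ∈ Icc α β, |f s| ≤ B) {x : ℝ} (hx : x ∈ Icc α β) :
    |∫ s in α..x, f s| ≤ B * (β - α) := by
  have hB0 : 0 ≤ B := (abs_nonneg _).trans (hB x hx)
  have := intervalIntegral.norm_integral_le_of_norm_le_const (a := α) (b := x) (C := B)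
    (f := f) (by
      intro s hs
      rw [uIoc_of_le hx.1] at hs
      exact hB s ⟨hs.1.le, hs.2.trans hx.2⟩)
  rw [Real.norm_eq_abs, abs_of_nonneg (sub_nonneg.2 hx.1)] at this
  refine this.trans ?_
  gcongr
  exact hx.2

/-- The Green operator of `-(1/ν)((νa∂ₓ)∂ₓ - W∂ₓ)` with Dirichlet conditions on `[α, β]`. -/
theorem exists_green {ν a : ℝ → ℝ} (W : ℝ) (hνc : Continuous ν) (hac : Continuous a)
    (hν : ∀ x, 0 < ν x) (ha : ∀ x, 0 < a x) {α β : ℝ} (hαβ : α < β) :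
    ∃ G : (ℝ →ᵇ ℝ) →L[ℝ] (ℝ →ᵇ ℝ), ∀ f : ℝ →ᵇ ℝ,
      (∀ x, x ∉ Ioo α β → G f x = 0) ∧
      ∃ gx : ℝ → ℝ, ∀ x ∈ Ioo α β, HasDerivAt (G f) (gx x) x ∧
        HasDerivAt (fun ξ => ν ξ * a ξ * gx ξ) (W * gx x - ν x * f x) x := by
  have hna : ∀ x, ν x * a x ≠ 0 := fun x => (mul_pos (hν x) (ha x)).ne'
  have hΘc : Continuous fun s => W / (ν s * a s) := continuous_const.div (hνc.mul hac) hna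
  set Θ : ℝ → ℝ := fun x => ∫ s in α..x, W / (ν s * a s) with hΘ
  have hΘd : ∀ x, HasDerivAt Θ (W / (ν x * a x)) x := hasDerivAt_primitive hΘc α
  have hΘcont : Continuous Θ := continuous_primitive' hΘc α
  set κ : ℝ → ℝ := fun x => Real.exp (Θ x) / (ν x * a x) with hκ
  have hκc : Continuous κ := (Real.continuous_exp.comp hΘcont).div (hνc.mul hac) hna
  have hκp : ∀ x, 0 < κ x := fun x => div_pos (Real.exp_pos _) (mul_pos (hν x) (ha x))
  set m : ℝ → ℝ := fun x => Real.exp (- Θ x) * ν x with hm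
  have hmc : Continuous m := (Real.continuous_exp.comp hΘcont.neg).mul hνc
  -- primitives
  let M : (ℝ →ᵇ ℝ) → ℝ → ℝ := fun f x => ∫ s in α..x, m s * f s
  have hMc : ∀ f, Continuous (M f) := fun f => continuous_primitive' (hmc.mul f.continuous) α
  let I : (ℝ →ᵇ ℝ) → ℝ → ℝ := fun f x => ∫ s in α..x, κ s * M f s
  let σ : ℝ → ℝ := fun x => ∫ s in α..x, κ s
  have hσβ : 0 < σ β := intervalIntegral.intervalIntegral_pos_of_pos
    (hκc.intervalIntegrable _ _) hκp hαβ
  let F : (ℝ →ᵇ ℝ) → ℝ → ℝ := fun f x => - I f x + I f β / σ β * σ x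
  have hId : ∀ f x, HasDerivAt (I f) (κ x * M f x) x := fun f x =>
    hasDerivAt_primitive (hκc.mul (hMc f)) α x
  have hσd : ∀ x, HasDerivAt σ (κ x) x := fun x => hasDerivAt_primitive hκc α x
  have hFd : ∀ f x, HasDerivAt (F f) (κ x * (I f β / σ β - M f x)) x := by
    intro f x
    exact ((hId f x).neg.add ((hσd x).const_mul (I f β / σ β))).congr_deriv (by ring)
  have hFc : ∀ f, Continuous (F f) := fun f =>
    continuous_iff_continuousAt.2 fun x => (hFd f x).continuousAt
  -- linearity
  have hMadd : ∀ f g x, M (f + g) x = M f x + M g x := by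
    intro f g x
    simp only [M, BoundedContinuousFunction.coe_add, Pi.add_apply, mul_add]
    exact intervalIntegral.integral_add ((hmc.mul f.continuous).intervalIntegrable _ _)
      ((hmc.mul g.continuous).intervalIntegrable _ _)
  have hMsmul : ∀ (r : ℝ) f x, M (r • f) x = r * M f x := by
    intro r f x
    simp only [M, BoundedContinuousFunction.coe_smul, smul_eq_mul]
    rw [← intervalIntegral.integral_const_mul]
    congr 1; funext s; ring
  have hIadd : ∀ f g x, I (f + g) x = I f x + I g x := by
    intro f g x
    simp only [I, hMadd, mul_add]
    exact intervalIntegral.integral_add ((hκc.mul (hMc f)).intervalIntegrable _ _)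
      ((hκc.mul (hMc g)).intervalIntegrable _ _)
  have hIsmul : ∀ (r : ℝ) f x, I (r • f) x = r * I f x := by
    intro r f x
    simp only [I, hMsmul]
    rw [← intervalIntegral.integral_const_mul]
    congr 1; funext s; ring
  -- bounds
  obtain ⟨Bκ, hBκ⟩ := isCompact_Icc.exists_bound_of_continuousOn (s := Icc α β) hκc.continuousOn
  obtain ⟨Bm, hBm⟩ := isCompact_Icc.exists_bound_of_continuousOn (s := Icc α β) hmc.continuousOn
  have hαI : α ∈ Icc α β := ⟨le_rfl, hαβ.le⟩
  have hβI : β ∈ Icc α β := ⟨hαβ.le, le_rfl⟩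
  have hBκ0 : 0 ≤ Bκ := (norm_nonneg _).trans (hBκ α hαI)
  have hBm0 : 0 ≤ Bm := (norm_nonneg _).trans (hBm α hαI)
  have hba : 0 ≤ β - α := (sub_pos.2 hαβ).le
  have hMb : ∀ f, ∀ x ∈ Icc α β, |M f x| ≤ Bm * ‖f‖ * (β - α) := by
    intro f x hx
    refine abs_primitive_le (fun s hs => ?_) hx
    rw [abs_mul]
    exact mul_le_mul (hBm s hs) (f.norm_coe_le_norm s) (abs_nonneg _) hBm0
  have hIb : ∀ f, ∀ x ∈ Icc α β, |I f x| ≤ Bκ * (Bm * ‖f‖ * (β - α)) * (β - α) := by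
    intro f x hx
    refine abs_primitive_le (fun s hs => ?_) hx
    rw [abs_mul]
    exact mul_le_mul (hBκ s hs) (hMb f s hs) (abs_nonneg _) hBκ0
  have hσb : ∀ x ∈ Icc α β, |σ x| ≤ Bκ * (β - α) := by
    intro x hx
    exact abs_primitive_le (fun s hs => hBκ s hs) hx
  set C := Bκ * (Bm * (β - α)) * (β - α) * (1 + Bκ * (β - α) / σ β) with hC
  have hFb : ∀ f, ∀ x ∈ Icc α β, |F f x| ≤ C * ‖f‖ := by
    intro f x hx
    have h1 := hIb f x hx
    have h2 := hIb f β hβI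
    have h3 := hσb x hx
    calc |F f x| ≤ |I f x| + |I f β / σ β * σ x| := by
          have := abs_add_le (- I f x) (I f β / σ β * σ x)
          rwa [abs_neg] at this
      _ = |I f x| + |I f β| / σ β * |σ x| := by rw [abs_mul, abs_div, abs_of_pos hσβ]
      _ ≤ Bκ * (Bm * ‖f‖ * (β - α)) * (β - α) +
          Bκ * (Bm * ‖f‖ * (β - α)) * (β - α) / σ β * (Bκ * (β - α)) := by gcongr
      _ = C * ‖f‖ := by rw [hC]; ring
  let cl : ℝ → ℝ := fun x => max α (min x β)
  have hclc : Continuous cl := by fun_prop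
  have hclI : ∀ x, cl x ∈ Icc α β := fun x => ⟨le_max_left _ _, max_le hαβ.le (min_le_right _ _)⟩
  let G0 : (ℝ →ᵇ ℝ) →ₗ[ℝ] (ℝ →ᵇ ℝ) :=
    { toFun := fun f => BoundedContinuousFunction.ofNormedAddCommGroup (fun x => F f (cl x))
        ((hFc f).comp hclc) (C * ‖f‖) (fun x => hFb f _ (hclI x))
      map_add' := by
        intro f g
        ext x
        simp only [F, hIadd, BoundedContinuousFunction.coe_ofNormedAddCommGroup,
          BoundedContinuousFunction.coe_add, Pi.add_apply]
        ring
      map_smul' := by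
        intro r f
        ext x
        simp only [F, hIsmul, BoundedContinuousFunction.coe_ofNormedAddCommGroup,
          BoundedContinuousFunction.coe_smul, smul_eq_mul, RingHom.id_apply]
        ring }
  have hC0 : 0 ≤ C := by positivity
  refine ⟨G0.mkContinuous C fun f => ?_, fun f => ⟨fun x hx => ?_,
    fun x => κ x * (I f β / σ β - M f x), fun x hx => ⟨?_, ?_⟩⟩⟩
  · refine (BoundedContinuousFunction.norm_le (by positivity)).2 fun x => ?_
    exact hFb f _ (hclI x)
  · change F f (cl x) = 0
    have : cl x = α ∨ cl x = β := by
      rcases le_or_gt x α with h | h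
      · left; simp only [cl]; rw [min_eq_left (h.trans hαβ.le), max_eq_left h]
      · right
        have : β ≤ x := by by_contra! h2; exact hx ⟨h, h2⟩
        simp only [cl]; rw [min_eq_right this, max_eq_right hαβ.le]
    rcases this with h | h
    · rw [h]; simp [F, I, σ]
    · rw [h]; simp only [F]; field_simp; ring
  · refine (hFd f x).congr_of_eventuallyEq ?_
    filter_upwards [Ioo_mem_nhds hx.1 hx.2] with z hz
    change F f (cl z) = F f z
    simp only [cl]
    rw [min_eq_left hz.2.le, max_eq_right hz.1.le]
  · have hfun : (fun ξ => ν ξ * a ξ * (κ ξ * (I f β / σ β - M f ξ))) =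
        fun ξ => Real.exp (Θ ξ) * (I f β / σ β - M f ξ) := by
      funext ξ
      simp only [hκ]
      have h1 := (hν ξ).ne'
      have h2 := (ha ξ).ne'
      field_simp
    rw [hfun]
    have hMd : HasDerivAt (M f) (m x * f x) x :=
      hasDerivAt_primitive (hmc.mul f.continuous) α x
    refine ((hΘd x).exp.mul (hMd.const_sub (I f β / σ β))).congr_deriv ?_
    have he : Real.exp (Θ x) * Real.exp (- Θ x) = 1 := by rw [← Real.exp_add]; simp
    simp only [hκ, hm]
    linear_combination (- ν x * f x) * he


/-- Elliptic minimum principle. -/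
lemma elliptic_min {ν a : ℝ → ℝ} {W : ℝ} (hν : ∀ x, 0 < ν x) (ha : ∀ x, 0 < a x) {α β : ℝ}
    {v vx r : ℝ → ℝ} (hc : ContinuousOn v (Icc α β)) (h1 : 0 ≤ v α) (h2 : 0 ≤ v β)
    (hd : ∀ x ∈ Ioo α β, HasDerivAt v (vx x) x ∧
      HasDerivAt (fun ξ => ν ξ * a ξ * vx ξ) (W * vx x - ν x * r x) x)
    (hr : ∀ x ∈ Ioo α β, v x < 0 → 0 < r x) : ∀ x ∈ Icc α β, 0 ≤ v x := by
  intro x hx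
  by_contra! hneg
  obtain ⟨z, hz, hmin⟩ := isCompact_Icc.exists_isMinOn ⟨x, hx⟩ hc
  have hvz : v z < 0 := (hmin hx).trans_lt hneg
  have hz' : z ∈ Ioo α β := by
    refine ⟨lt_of_le_of_ne hz.1 ?_, lt_of_le_of_ne hz.2 ?_⟩
    · rintro rfl; exact absurd hvz (not_lt.2 h1)
    · rintro rfl; exact absurd hvz (not_lt.2 h2)
  have hlm : IsLocalMin v z := by
    filter_upwards [Icc_mem_nhds hz'.1 hz'.2] with y hy using hmin hy
  have hev : ∀ᶠ ξ in 𝓝 z, HasDerivAt v (vx ξ) ξ := by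
    filter_upwards [Ioo_mem_nhds hz'.1 hz'.2] with y hy using (hd y hy).1
  obtain ⟨e1, e2⟩ := flux_min (k := fun ξ => ν ξ * a ξ) (fun ξ => mul_pos (hν ξ) (ha ξ)) hev hlm
    (hd z hz').2
  rw [e1] at e2
  have := mul_pos (hν z) (hr z hz' hvz)
  linarith

section ring
variable {A : Type*} [NormedRing A] [NormedAlgebra ℝ A] [CompleteSpace A]

lemma resolvent_of_unit {G : A} {l : ℝ} (h : IsUnit (1 + l • G)) :
    ∃ R : A, R = G - l • (G * R) ∧ (∀ Y, Commute Y G → Commute Y R) ∧ G = (1 + l • G) * R := by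
  obtain ⟨U, hU⟩ := h
  have e : (1 + l • G) * (↑U⁻¹ * G) = G := by rw [← hU, ← mul_assoc, Units.mul_inv, one_mul]
  refine ⟨↑U⁻¹ * G, ?_, ?_, e.symm⟩
  · rw [add_mul, one_mul, smul_mul_assoc] at e
    exact eq_sub_of_add_eq e
  · intro Y hY
    refine Commute.mul_right ?_ hY
    apply Commute.units_inv_right
    rw [hU]
    exact (Commute.one_right Y).add_right (hY.smul_right l)

lemma unit_ladder {G : A}
    (hyp : ∀ l : ℝ, 0 < l → ∀ R : A, R = G - l • (G * R) → ‖l • R‖ ≤ 1) :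
    ∀ N : ℝ, ∃ l : ℝ, N ≤ l ∧ 0 < l ∧ IsUnit (1 + l • G) := by
  have unit_of : ∀ X : A, ‖X‖ < 1 → IsUnit (1 + X) := by
    intro X hX
    have := isUnit_one_sub_of_norm_lt_one (x := -X) (by rwa [norm_neg])
    rwa [sub_neg_eq_add] at this
  set l0 : ℝ := 1 / (2 * (‖G‖ + 1)) with hl0
  have hl0p : 0 < l0 := by positivity
  have ladder : ∀ n : ℕ, IsUnit (1 + (l0 * (3 / 2) ^ n) • G) := by
    intro n
    induction n with
    | zero =>
      apply unit_of
      rw [pow_zero, mul_one, norm_smul, Real.norm_of_nonneg hl0p.le, hl0, one_div,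
        inv_mul_lt_iff₀ (by positivity)]
      linarith [norm_nonneg G]
    | succ n ih =>
      set l := l0 * (3 / 2) ^ n with hl
      have hlp : 0 < l := by positivity
      obtain ⟨R, hR, -, hG⟩ := resolvent_of_unit ih
      have hn := hyp l hlp R hR
      have h2 : IsUnit (1 + (1 / 2 : ℝ) • (l • R)) := by
        apply unit_of
        rw [norm_smul]
        norm_num
        linarith
      have h3 : 1 + (l0 * (3 / 2) ^ (n + 1)) • G = (1 + l • G) * (1 + (1 / 2 : ℝ) • (l • R)) := by
        have e1 : l0 * (3 / 2) ^ (n + 1) = l + 1 / 2 * l := by rw [hl, pow_succ]; ring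
        rw [mul_add, mul_one, mul_smul_comm, mul_smul_comm, ← hG, e1, add_smul, add_assoc,
          smul_smul]
      rw [h3]
      exact ih.mul h2
  intro N
  have ht : Tendsto (fun n : ℕ => l0 * (3 / 2 : ℝ) ^ n) atTop atTop :=
    (tendsto_pow_atTop_atTop_of_one_lt (by norm_num)).const_mul_atTop hl0p
  obtain ⟨n, hn⟩ := (ht.eventually (eventually_ge_atTop N)).exists
  exact ⟨_, hn, by positivity, ladder n⟩

lemma norm_exp_le' [NormOneClass A] (B : A) : ‖NormedSpace.exp B‖ ≤ Real.exp ‖B‖ := by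
  rw [NormedSpace.exp_eq_tsum ℝ]
  have hs : Summable fun n : ℕ => ((n.factorial : ℝ)⁻¹) * ‖B‖ ^ n := by
    have := Real.summable_pow_div_factorial ‖B‖
    simpa [div_eq_inv_mul] using this
  have : Real.exp ‖B‖ = ∑' n : ℕ, ((n.factorial : ℝ)⁻¹) * ‖B‖ ^ n := by
    rw [Real.exp_eq_exp_ℝ, NormedSpace.exp_eq_tsum ℝ]
    rfl
  rw [this]
  refine tsum_of_norm_bounded hs.hasSum fun n => ?_
  rw [norm_smul, Real.norm_of_nonneg (by positivity)]
  gcongr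
  exact norm_pow_le _ _

lemma norm_exp_semigroup [NormOneClass A] {N : A} (hN : ‖N‖ ≤ 1) {l t : ℝ} (hl : 0 ≤ l)
    (ht : 0 ≤ t) : ‖NormedSpace.exp (t • (l • (N - 1)))‖ ≤ 1 := by
  letI : NormedAlgebra ℚ A := NormedAlgebra.restrictScalars ℚ ℝ A
  have e : t • (l • (N - 1)) = (t * l) • N + algebraMap ℝ A (-(t * l)) := by
    rw [smul_smul, smul_sub, Algebra.algebraMap_eq_smul_one, neg_smul, sub_eq_add_neg]
  have hc : Commute ((t * l) • N) (algebraMap ℝ A (-(t * l))) := (Algebra.commutes _ _).symm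
  rw [e, NormedSpace.exp_add_of_commute hc, ← NormedSpace.algebraMap_exp_comm]
  refine (norm_mul_le _ _).trans ?_
  rw [norm_algebraMap', ← Real.exp_eq_exp_ℝ, Real.norm_of_nonneg (Real.exp_pos _).le]
  have h1 : ‖NormedSpace.exp ((t * l) • N)‖ ≤ Real.exp (t * l) := by
    refine (norm_exp_le' _).trans (Real.exp_le_exp.2 ?_)
    rw [norm_smul, Real.norm_of_nonneg (by positivity)]
    have : 0 ≤ t * l := by positivity
    nlinarith
  calc _ ≤ Real.exp (t * l) * Real.exp (-(t * l)) := by gcongr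
    _ = 1 := by rw [← Real.exp_add]; simp
end ring


/-- The defining properties of a Green operator. -/
def IsGreen (ν a : ℝ → ℝ) (W α β : ℝ) (G : (ℝ →ᵇ ℝ) →L[ℝ] (ℝ →ᵇ ℝ)) : Prop :=
  ∀ f : ℝ →ᵇ ℝ, (∀ x, x ∉ Ioo α β → G f x = 0) ∧
      ∃ gx : ℝ → ℝ, ∀ x ∈ Ioo α β, HasDerivAt (G f) (gx x) x ∧
        HasDerivAt (fun ξ => ν ξ * a ξ * gx ξ) (W * gx x - ν x * f x) x

lemma resolvent_apply {G R : (ℝ →ᵇ ℝ) →L[ℝ] (ℝ →ᵇ ℝ)} {l : ℝ} (hR : R = G - l • (G * R))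
    (f : ℝ →ᵇ ℝ) : l • R f = G (l • (f - l • R f)) := by
  have h : R f = (G - l • (G * R)) f := by rw [← hR]
  have h2 : R f = G f - l • G (R f) := h
  rw [map_smul, map_sub, map_smul, ← h2]

lemma green_contract {ν a : ℝ → ℝ} {W α β : ℝ} (hν : ∀ x, 0 < ν x) (ha : ∀ x, 0 < a x)
    {G : (ℝ →ᵇ ℝ) →L[ℝ] (ℝ →ᵇ ℝ)} (hG : IsGreen ν a W α β G) (l : ℝ) (hl : 0 < l)
    (R : (ℝ →ᵇ ℝ) →L[ℝ] (ℝ →ᵇ ℝ)) (hR : R = G - l • (G * R)) : ‖l • R‖ ≤ 1 := by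
  have key : ∀ f : ℝ →ᵇ ℝ, ∀ x, - ‖f‖ ≤ (l • R f) x := by
    intro f x
    have hg := resolvent_apply hR f
    set g := l • R f with hgdef
    obtain ⟨h0, gx, hgx⟩ := hG (l • (f - g))
    rw [← hg] at h0 hgx
    by_cases hx : x ∈ Ioo α β
    · have hαβ : α < β := hx.1.trans hx.2
      have := elliptic_min (W := W) (α := α) (β := β) hν ha (v := fun x => g x + ‖f‖) (vx := gx)
        (r := fun x => (l • (f - g)) x) (by fun_prop)
        (by rw [h0 α (by simp)]; simp) (by rw [h0 β (by simp)]; simp)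
        (fun x hx => ⟨(hgx x hx).1.add_const _, (hgx x hx).2⟩) (by
          intro x hx hv
          have h1 := (abs_le.1 (f.norm_coe_le_norm x)).1
          change 0 < l * (f x - g x)
          apply mul_pos hl
          linarith) x ⟨hx.1.le, hx.2.le⟩
      linarith
    · rw [h0 x hx]
      linarith [norm_nonneg f]
  refine ContinuousLinearMap.opNorm_le_bound _ zero_le_one fun f => ?_
  rw [one_mul]
  refine (BoundedContinuousFunction.norm_le (norm_nonneg f)).2 fun x => ?_
  rw [Real.norm_eq_abs, abs_le]
  refine ⟨key f x, ?_⟩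
  have := key (-f) x
  rw [norm_neg, map_neg, smul_neg, BoundedContinuousFunction.coe_neg, Pi.neg_apply] at this
  change (l • R f) x ≤ ‖f‖
  linarith

lemma modulus {f Y : ℝ → ℝ} (hf : Continuous f) (hY : Continuous Y) (hinj : Function.Injective Y)
    (α β : ℝ) {ε : ℝ} (hε : 0 < ε) :
    ∃ C, 0 ≤ C ∧ ∀ x ∈ Icc α β, ∀ x0 ∈ Icc α β, |f x - f x0| ≤ ε + C * (Y x - Y x0) ^ 2 := by
  set S : Set (ℝ × ℝ) := (Icc α β ×ˢ Icc α β) ∩ {p | ε ≤ |f p.1 - f p.2|}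
  have hS : IsCompact S := (isCompact_Icc.prod isCompact_Icc).inter_right
    (isClosed_le continuous_const (by fun_prop))
  rcases S.eq_empty_or_nonempty with h | h
  · refine ⟨0, le_rfl, fun x hx x0 hx0 => ?_⟩
    by_contra! hcon
    have : (x, x0) ∈ S := ⟨⟨hx, hx0⟩, by simp at hcon; exact hcon.le⟩
    rw [h] at this
    exact this
  · have hcont : ContinuousOn (fun p : ℝ × ℝ => |f p.1 - f p.2| / (Y p.1 - Y p.2) ^ 2) S := by
      apply ContinuousOn.div (by fun_prop) (by fun_prop)
      intro p hp h0
      have h1 : Y p.1 = Y p.2 := by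
        have := pow_eq_zero_iff (two_ne_zero) |>.1 h0
        linarith
      have h2 := hp.2
      rw [mem_ofPred_eq, hinj h1] at h2
      simp at h2
      linarith
    obtain ⟨C, hC⟩ := hS.exists_bound_of_continuousOn hcont
    obtain ⟨p, hp⟩ := h
    refine ⟨C, (norm_nonneg _).trans (hC p hp), fun x hx x0 hx0 => ?_⟩
    have hC0 := (norm_nonneg _).trans (hC p hp)
    have hsq : 0 ≤ C * (Y x - Y x0) ^ 2 := by positivity
    rcases lt_or_ge |f x - f x0| ε with h | h
    · linarith
    · have h1 := hC (x, x0) ⟨⟨hx, hx0⟩, h⟩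
      rw [Real.norm_of_nonneg (by positivity)] at h1
      have hne : (Y x - Y x0) ^ 2 ≠ 0 := by
        intro h0
        have h2 : Y x = Y x0 := by
          have := pow_eq_zero_iff (two_ne_zero) |>.1 h0
          linarith
        rw [hinj h2] at h
        simp at h
        linarith
      rw [div_le_iff₀ (by positivity)] at h1
      linarith

lemma green_conv_upper {ν a : ℝ → ℝ} {W α β : ℝ} (hνc : Continuous ν) (hac : Continuous a)
    (hν : ∀ x, 0 < ν x) (ha : ∀ x, 0 < a x) (hαβ : α < β)
    {G : (ℝ →ᵇ ℝ) →L[ℝ] (ℝ →ᵇ ℝ)} (hG : IsGreen ν a W α β G) {f : ℝ →ᵇ ℝ}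
    (hf : ∀ x, x ∉ Ioo α β → f x = 0) {η : ℝ} (hη : 0 < η) :
    ∃ L0 : ℝ, ∀ l, L0 ≤ l → 0 < l → ∀ R : (ℝ →ᵇ ℝ) →L[ℝ] (ℝ →ᵇ ℝ),
      R = G - l • (G * R) → ∀ x, (l • R f) x ≤ f x + η := by
  have hna : ∀ x, ν x * a x ≠ 0 := fun x => (mul_pos (hν x) (ha x)).ne'
  set y : ℝ → ℝ := fun x => 1 / (ν x * a x) with hy
  have hyc : Continuous y := continuous_const.div (hνc.mul hac) hna
  have hyp : ∀ x, 0 < y x := fun x => one_div_pos.2 (mul_pos (hν x) (ha x))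
  set Y : ℝ → ℝ := fun x => ∫ s in α..x, y s with hY
  have hYd : ∀ x, HasDerivAt Y (y x) x := hasDerivAt_primitive hyc α
  have hYc : Continuous Y := continuous_primitive' hyc α
  have hYm : StrictMono Y := strictMono_of_hasDerivAt_pos hYd hyp
  obtain ⟨C, hC0, hC⟩ := modulus f.continuous hYc hYm.injective α β (half_pos hη)
  have hρc : Continuous (fun p : ℝ × ℝ => 2 * C * y p.1 * (1 - W * (Y p.1 - Y p.2)) / ν p.1) := by
    apply Continuous.div (by fun_prop) (by fun_prop)
    exact fun p => (hν _).ne'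
  obtain ⟨C', hC'⟩ := (isCompact_Icc.prod isCompact_Icc).exists_bound_of_continuousOn
    (s := Icc α β ×ˢ Icc α β) hρc.continuousOn
  have hαI : α ∈ Icc α β := ⟨le_rfl, hαβ.le⟩
  have hβI : β ∈ Icc α β := ⟨hαβ.le, le_rfl⟩
  have hC'0 : 0 ≤ C' := (norm_nonneg _).trans (hC' (α, α) ⟨hαI, hαI⟩)
  refine ⟨2 * C' / η, fun l hl hlp R hR x0 => ?_⟩
  have hCl : C' / l ≤ η / 2 := by
    rw [div_le_iff₀ hη] at hl
    rw [div_le_iff₀ hlp]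
    linarith
  have hg := resolvent_apply hR f
  set g := l • R f with hgdef
  obtain ⟨h0, gx, hgx⟩ := hG (l • (f - g))
  rw [← hg] at h0 hgx
  by_cases hx0 : x0 ∈ Ioo α β
  swap
  · rw [h0 x0 hx0, hf x0 hx0]; linarith
  have hx0' : x0 ∈ Icc α β := ⟨hx0.1.le, hx0.2.le⟩
  have hbge : ∀ x ∈ Icc α β, f x + C' / l ≤ f x0 + η / 2 + C * (Y x - Y x0) ^ 2 + C' / l := by
    intro x hx
    have := (abs_le.1 (hC x hx x0 hx0')).2
    linarith
  have hCl0 : 0 ≤ C' / l := by positivity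
  have := elliptic_min (W := W) (α := α) (β := β) hν ha
    (v := fun x => (f x0 + η / 2 + C * (Y x - Y x0) ^ 2 + C' / l) - g x)
    (vx := fun x => 2 * C * (Y x - Y x0) * y x - gx x)
    (r := fun x => l * (g x - f x) - 2 * C * y x * (1 - W * (Y x - Y x0)) / ν x)
    (by fun_prop)
    (by
      have h1 := hbge α hαI
      rw [hf α (by simp)] at h1
      rw [h0 α (by simp)]; linarith)
    (by
      have h1 := hbge β hβI
      rw [hf β (by simp)] at h1
      rw [h0 β (by simp)]; linarith)
    (fun x hx => by
      refine ⟨?_, ?_⟩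
      · have h1 := (((hYd x).sub_const (Y x0)).fun_pow 2).const_mul C
        have h2 := ((h1.const_add (f x0 + η / 2)).add_const (C' / l)).sub (hgx x hx).1
        refine h2.congr_deriv ?_
        push_cast
        ring
      · have h1 := (((hYd x).sub_const (Y x0)).const_mul (2 * C)).sub (hgx x hx).2
        refine (h1.congr_of_eventuallyEq (Eventually.of_forall fun ξ => ?_)).congr_deriv ?_
        · simp only [Pi.sub_apply, hy]
          have e1 := (hν ξ).ne'
          have e2 := (ha ξ).ne'
          field_simp
        · change 2 * C * y x - (W * gx x - ν x * (l * (f x - g x))) = _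
          have e1 := (hν x).ne'
          field_simp
          ring)
    (by
      intro x hx hv
      have h1 := hbge x ⟨hx.1.le, hx.2.le⟩
      have h2 := (le_abs_self _).trans (hC' (x, x0) ⟨⟨hx.1.le, hx.2.le⟩, hx0'⟩)
      have h3 : C' / l < g x - f x := by linarith
      rw [div_lt_iff₀ hlp] at h3
      simp only at h2
      linarith) x0 hx0'
  simp only [sub_self] at this
  have e : C * (0:ℝ) ^ 2 = 0 := by ring
  rw [e] at this
  linarith

lemma green_conv {ν a : ℝ → ℝ} {W α β : ℝ} (hνc : Continuous ν) (hac : Continuous a)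
    (hν : ∀ x, 0 < ν x) (ha : ∀ x, 0 < a x) (hαβ : α < β)
    {G : (ℝ →ᵇ ℝ) →L[ℝ] (ℝ →ᵇ ℝ)} (hG : IsGreen ν a W α β G) {f : ℝ →ᵇ ℝ}
    (hf : ∀ x, x ∉ Ioo α β → f x = 0) {η : ℝ} (hη : 0 < η) :
    ∃ L0 : ℝ, ∀ l, L0 ≤ l → 0 < l → ∀ R : (ℝ →ᵇ ℝ) →L[ℝ] (ℝ →ᵇ ℝ),
      R = G - l • (G * R) → ‖l • R f - f‖ ≤ η := by
  obtain ⟨L1, h1⟩ := green_conv_upper hνc hac hν ha hαβ hG hf hη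
  obtain ⟨L2, h2⟩ := green_conv_upper hνc hac hν ha hαβ hG (f := -f)
    (fun x hx => by simp [hf x hx]) hη
  refine ⟨max L1 L2, fun l hl hlp R hR => ?_⟩
  refine (BoundedContinuousFunction.norm_le hη.le).2 fun x => ?_
  have e1 := h1 l ((le_max_left _ _).trans hl) hlp R hR x
  have e2 := h2 l ((le_max_right _ _).trans hl) hlp R hR x
  rw [map_neg, smul_neg, BoundedContinuousFunction.coe_neg, BoundedContinuousFunction.coe_neg,
    Pi.neg_apply, Pi.neg_apply] at e2
  rw [Real.norm_eq_abs, BoundedContinuousFunction.coe_sub, Pi.sub_apply, abs_le]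
  constructor <;> linarith


lemma resolvent_apply_gen {X : Type*} [NormedAddCommGroup X] [NormedSpace ℝ X]
    {G R : X →L[ℝ] X} {l : ℝ} (hR : R = G - l • (G * R)) (f : X) :
    l • R f = G (l • (f - l • R f)) := by
  have h : R f = (G - l • (G * R)) f := by rw [← hR]
  have h2 : R f = G f - l • G (R f) := h
  rw [map_smul, map_sub, map_smul, ← h2]

/-- Abstract Yosida approximation of the semigroup generated by the inverse of `-G`. -/
lemma yosida_approx {X : Type*} [NormedAddCommGroup X] [NormedSpace ℝ X] [CompleteSpace X]
    [Nontrivial X] {G : X →L[ℝ] X}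
    (hcon : ∀ l : ℝ, 0 < l → ∀ R : X →L[ℝ] X, R = G - l • (G * R) → ‖l • R‖ ≤ 1)
    {f : X} {η : ℝ} (hη : 0 < η)
    (hconv : ∃ L0 : ℝ, ∀ l, L0 ≤ l → 0 < l → ∀ R : X →L[ℝ] X,
      R = G - l • (G * R) → ‖l • R f - f‖ ≤ η / 2) :
    ∃ w g wt : ℝ → X, (∀ t, HasDerivAt w (wt t) t) ∧ (∀ t, w t = G (g t)) ∧
      ‖w 0 - f‖ ≤ η ∧ ∀ t, 0 ≤ t → ‖wt t - (- g t)‖ ≤ η := by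
  have ladder := unit_ladder hcon
  obtain ⟨L0, hL0⟩ := hconv
  obtain ⟨m, hm, hmp, hmu⟩ := ladder L0
  obtain ⟨S, hS, hScomm, -⟩ := resolvent_of_unit hmu
  obtain ⟨l, hl, hlp, hlu⟩ := ladder (4 * m ^ 2 * ‖f‖ / η)
  obtain ⟨R, hR, hRcomm, -⟩ := resolvent_of_unit hlu
  have hA1 : ‖m • S‖ ≤ 1 := hcon m hmp S hS
  have hN1 : ‖l • R‖ ≤ 1 := hcon l hlp R hR
  set A : X →L[ℝ] X := m • S with hA
  set N : X →L[ℝ] X := l • R with hN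
  have hAle : ∀ z : X, ‖A z‖ ≤ ‖z‖ := fun z =>
    (A.le_opNorm z).trans (mul_le_of_le_one_left (norm_nonneg z) hA1)
  have hNle : ∀ z : X, ‖N z‖ ≤ ‖z‖ := fun z =>
    (N.le_opNorm z).trans (mul_le_of_le_one_left (norm_nonneg z) hN1)
  have hAG : ∀ z : X, A z = G (m • (z - A z)) := resolvent_apply_gen hS
  have hGR : Commute G R := hRcomm G (Commute.refl G)
  have hRS : Commute R S := hScomm R hGR.symm
  -- second resolvent form
  have hNG : ∀ z : X, N z = l • (G z - N (G z)) := by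
    intro z
    have e : G * R = R * G := hGR
    rw [e] at hR
    have h1 : R z = (G - l • (R * G)) z := by rw [← hR]
    have h2 : R z = G z - l • R (G z) := h1
    change l • R z = l • (G z - l • R (G z))
    rw [← h2]
  set B : X →L[ℝ] X := l • (N - 1) with hB
  set E : ℝ → (X →L[ℝ] X) := fun t => NormedSpace.exp (t • B) with hE
  have hEn : ∀ t, 0 ≤ t → ∀ z : X, ‖E t z‖ ≤ ‖z‖ := by
    intro t ht z
    have h1 : ‖E t‖ ≤ 1 := norm_exp_semigroup hN1 hlp.le ht
    exact ((E t).le_opNorm z).trans (mul_le_of_le_one_left (norm_nonneg z) h1)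
  have hBA : Commute A B := by
    have h1 : Commute A N := (hRS.symm.smul_left m).smul_right l
    exact (h1.sub_right (Commute.one_right A)).smul_right l
  have hEA : ∀ t (z : X), E t (A z) = A (E t z) := by
    intro t z
    have h1 : Commute A (E t) := (hBA.smul_right t).exp_right
    have h2 : A * E t = E t * A := h1
    have h3 : (A * E t) z = (E t * A) z := by rw [h2]
    exact h3.symm
  set w : ℝ → X := fun t => E t (A (A f)) with hw
  have hwd : ∀ t, HasDerivAt w (B (w t)) t := by
    intro t
    have h1 : HasDerivAt E (B * E t) t := hasDerivAt_exp_smul_const' (𝕂 := ℝ) B t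
    have h2 := h1.clm_apply (hasDerivAt_const t (A (A f)))
    refine h2.congr_deriv ?_
    simp [hw]
  set y2 : ℝ → X := fun t => m • (E t f - A (E t f)) with hy2
  set g : ℝ → X := fun t => A (y2 t) with hg
  set k : ℝ → X := fun t => m • (y2 t - A (y2 t)) with hk
  have hgk : ∀ t, g t = G (k t) := fun t => hAG (y2 t)
  have hwg : ∀ t, w t = G (g t) := by
    intro t
    have h1 : w t = A (A (E t f)) := by simp only [hw, hEA]
    rw [h1, hAG (A (E t f))]
    simp only [hg, hy2, map_smul, map_sub]
  have hkn : ∀ t, 0 ≤ t → ‖k t‖ ≤ 4 * m ^ 2 * ‖f‖ := by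
    intro t ht
    have h1 := hEn t ht f
    have h2 : ∀ z : X, ‖m • (z - A z)‖ ≤ 2 * m * ‖z‖ := by
      intro z
      rw [norm_smul, Real.norm_of_nonneg hmp.le]
      have := (norm_sub_le z (A z)).trans (add_le_add le_rfl (hAle z))
      calc m * ‖z - A z‖ ≤ m * (‖z‖ + ‖z‖) := by gcongr
        _ = _ := by ring
    calc ‖k t‖ ≤ 2 * m * ‖y2 t‖ := h2 _
      _ ≤ 2 * m * (2 * m * ‖E t f‖) := by gcongr; exact h2 _
      _ ≤ 2 * m * (2 * m * ‖f‖) := by gcongr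
      _ = _ := by ring
  have herr : ∀ t, 0 ≤ t → ‖B (w t) - (- g t)‖ ≤ η := by
    intro t ht
    have h1 : B (w t) = - N (g t) := by
      rw [hNG (g t), ← hwg]
      change l • (N (w t) - w t) = _
      rw [← smul_neg, neg_sub]
    have h2 : l • (B (w t) - (- g t)) = N (k t) := by
      rw [h1, hNG (k t), ← hgk]
      congr 1
      abel
    have h3 : l * ‖B (w t) - (- g t)‖ ≤ 4 * m ^ 2 * ‖f‖ := by
      have h4 := (hNle (k t)).trans (hkn t ht)
      rwa [← h2, norm_smul, Real.norm_of_nonneg hlp.le] at h4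
    rw [div_le_iff₀ hη] at hl
    have h5 : l * ‖B (w t) - (- g t)‖ ≤ l * η := h3.trans hl
    exact le_of_mul_le_mul_left h5 hlp
  have e0 : w 0 = A (A f) := by
    simp only [hw, hE, zero_smul, NormedSpace.exp_zero]
    rfl
  have e1 : ‖A f - f‖ ≤ η / 2 := hL0 m hm hmp S hS
  have e2 : ‖w 0 - f‖ ≤ η := by
    rw [e0]
    have : A (A f) - f = A (A f - f) + (A f - f) := by rw [map_sub]; abel
    rw [this]
    calc _ ≤ ‖A (A f - f)‖ + ‖A f - f‖ := norm_add_le _ _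
      _ ≤ η / 2 + η / 2 := add_le_add ((hAle _).trans e1) e1
      _ = η := by ring
  exact ⟨w, g, fun t => B (w t), hwd, hwg, e2, herr⟩

/-- Approximate classical solutions of the Dirichlet problem on `[α, β]`. -/
theorem approx_solution {ν a : ℝ → ℝ} {W α β : ℝ} (hνc : Continuous ν) (hac : Continuous a)
    (hν : ∀ x, 0 < ν x) (ha : ∀ x, 0 < a x) (hαβ : α < β) {f : ℝ →ᵇ ℝ}
    (hf : ∀ x, x ∉ Ioo α β → f x = 0) {η : ℝ} (hη : 0 < η) :
    ∃ w wt wx h : ℝ → ℝ → ℝ, Continuous (fun p : ℝ × ℝ => w p.1 p.2) ∧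
      (∀ t x, x ∉ Ioo α β → w t x = 0) ∧ (∀ x, |w 0 x - f x| ≤ η) ∧
      (∀ t, Continuous (wt t) ∧ Continuous (h t)) ∧
      (∀ t x, HasDerivAt (fun σ => w σ x) (wt t x) t) ∧
      (∀ t, ∀ x ∈ Ioo α β, HasDerivAt (w t) (wx t x) x ∧
        HasDerivAt (fun ξ => ν ξ * a ξ * wx t ξ) (W * wx t x + ν x * h t x) x) ∧
      (∀ t, 0 ≤ t → ∀ x, |wt t x - h t x| ≤ η) ∧
      (∀ t x₁ x₂, HasDerivAt (fun σ => ∫ ξ in x₂..x₁, ν ξ * w σ ξ)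
        (∫ ξ in x₂..x₁, ν ξ * wt t ξ) t) := by
  obtain ⟨G, hG⟩ := exists_green W hνc hac hν ha hαβ
  have hGr : IsGreen ν a W α β G := hG
  have : Nontrivial (ℝ →ᵇ ℝ) := by
    refine ⟨0, BoundedContinuousFunction.const ℝ 1, fun h => ?_⟩
    have h1 := DFunLike.congr_fun h 0
    simp at h1
  obtain ⟨w, g, wt, hwd, hwg, e2, herr⟩ := yosida_approx
    (fun l hl R hR => green_contract hν ha hGr l hl R hR) hη
    (green_conv hνc hac hν ha hαβ hGr hf (half_pos hη))
  choose h0 gx hgx using hGr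
  refine ⟨fun t x => w t x, fun t x => wt t x, fun t x => gx (g t) x, fun t x => (- g t) x,
    ?_, ?_, ?_, ?_, ?_, ?_, ?_, ?_⟩
  · have hwc : Continuous w := continuous_iff_continuousAt.2 fun t => (hwd t).continuousAt
    exact (hwc.comp continuous_fst).eval continuous_snd
  · intro t x hx
    have := h0 (g t) x hx
    rwa [← hwg] at this
  · intro x
    exact ((w 0 - f).norm_coe_le_norm x).trans e2
  · intro t
    exact ⟨(wt t).continuous, (- g t).continuous⟩
  · intro t x
    exact (BoundedContinuousFunction.evalCLM ℝ x).hasFDerivAt.comp_hasDerivAt t (hwd t)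
  · intro t x hx
    obtain ⟨q1, q2⟩ := hgx (g t) x hx
    rw [← hwg] at q1
    refine ⟨q1, q2.congr_deriv ?_⟩
    change _ = W * gx (g t) x + ν x * (- (g t x))
    ring
  · intro t ht x
    exact ((wt t - (- g t)).norm_coe_le_norm x).trans (herr t ht)
  · intro t x₁ x₂
    obtain ⟨C, hC⟩ := isCompact_uIcc.exists_bound_of_continuousOn (s := uIcc x₂ x₁)
      hνc.continuousOn
    let ℓ0 : (ℝ →ᵇ ℝ) →ₗ[ℝ] ℝ :=
      { toFun := fun z => ∫ ξ in x₂..x₁, ν ξ * z ξ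
        map_add' := by
          intro z z'
          simp only [BoundedContinuousFunction.coe_add, Pi.add_apply, mul_add]
          exact intervalIntegral.integral_add ((hνc.mul z.continuous).intervalIntegrable _ _)
            ((hνc.mul z'.continuous).intervalIntegrable _ _)
        map_smul' := by
          intro r z
          simp only [BoundedContinuousFunction.coe_smul, smul_eq_mul, RingHom.id_apply]
          rw [← intervalIntegral.integral_const_mul]
          congr 1; funext s; ring }
    let ℓ : (ℝ →ᵇ ℝ) →L[ℝ] ℝ := ℓ0.mkContinuous (C * |x₁ - x₂|) (by
      intro z
      have := intervalIntegral.norm_integral_le_of_norm_le_const (a := x₂) (b := x₁)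
        (C := C * ‖z‖) (f := fun ξ => ν ξ * z ξ) (by
          intro s hs
          rw [norm_mul]
          exact mul_le_mul (hC s (uIoc_subset_uIcc hs)) (z.norm_coe_le_norm s) (norm_nonneg _)
            ((norm_nonneg _).trans (hC s (uIoc_subset_uIcc hs))))
      refine this.trans (le_of_eq ?_)
      ring)
    exact ℓ.hasFDerivAt.comp_hasDerivAt t (hwd t)


lemma barrier_alg {A1 A2 lam Lam g γ r p q V1 V2 : ℝ} (hlam : 0 < lam) (h1 : lam ≤ A1)
    (h1' : A1 ≤ Lam) (h2 : lam ≤ A2) (h2' : A2 ≤ Lam) (hr : 0 < r) (hγ2 : 2 ≤ γ)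
    (hg : g * (2 * r ^ 2) = γ) (hγ : 2 * Lam + 2 * r * (|V1| + |V2|) ≤ lam * γ)
    (hpq : p ^ 2 + q ^ 2 < 2 * r ^ 2) :
    0 ≤ Real.exp (g * (2 * r ^ 2 - p ^ 2 - q ^ 2)) *
        (A1 * (4 * g ^ 2 * p ^ 2 - 2 * g) + A2 * (4 * g ^ 2 * q ^ 2 - 2 * g)
          - 2 * g * (V1 * p + V2 * q))
      + 4 * g * lam * γ * (Real.exp (g * (2 * r ^ 2 - p ^ 2 - q ^ 2)) - 1) := by
  have hgp : 0 < g := by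
    by_contra! hn
    have : g * (2 * r ^ 2) ≤ 0 := mul_nonpos_of_nonpos_of_nonneg hn (by positivity)
    linarith
  have hp : |p| ≤ 2 * r := by
    apply abs_le_of_sq_le_sq _ (by positivity)
    nlinarith [sq_nonneg q, sq_nonneg r]
  have hq : |q| ≤ 2 * r := by
    apply abs_le_of_sq_le_sq _ (by positivity)
    nlinarith [sq_nonneg p, sq_nonneg r]
  have hV : V1 * p + V2 * q ≤ 2 * r * (|V1| + |V2|) := by
    have e1 : V1 * p ≤ |V1| * (2 * r) := by
      calc V1 * p ≤ |V1 * p| := le_abs_self _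
        _ = |V1| * |p| := abs_mul _ _
        _ ≤ _ := by gcongr
    have e2 : V2 * q ≤ |V2| * (2 * r) := by
      calc V2 * q ≤ |V2 * q| := le_abs_self _
        _ = |V2| * |q| := abs_mul _ _
        _ ≤ _ := by gcongr
    linarith
  set e := Real.exp (g * (2 * r ^ 2 - p ^ 2 - q ^ 2)) with he
  have he1 : 1 ≤ e := Real.one_le_exp (mul_nonneg hgp.le (by linarith))
  have hF : 4 * g ^ 2 * lam * (p ^ 2 + q ^ 2) - 2 * g * (lam * γ) ≤
      (A1 * (4 * g ^ 2 * p ^ 2 - 2 * g) + A2 * (4 * g ^ 2 * q ^ 2 - 2 * g)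
          - 2 * g * (V1 * p + V2 * q)) := by
    have t1 : 0 ≤ (A1 - lam) * (g ^ 2 * p ^ 2) := mul_nonneg (by linarith) (by positivity)
    have t2 : 0 ≤ (A2 - lam) * (g ^ 2 * q ^ 2) := mul_nonneg (by linarith) (by positivity)
    have t3 : g * (A1 + A2 + (V1 * p + V2 * q)) ≤ g * (lam * γ) := by gcongr; linarith
    nlinarith
  have hgg : 0 ≤ g * (lam * γ) := by positivity
  by_cases hc : r ^ 2 ≤ p ^ 2 + q ^ 2
  · have h3 : 0 ≤ 4 * g ^ 2 * lam * (p ^ 2 + q ^ 2) - 2 * g * (lam * γ) := by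
      have : g ^ 2 * lam * r ^ 2 ≤ g ^ 2 * lam * (p ^ 2 + q ^ 2) := by gcongr
      have h4 : 2 * g * (lam * γ) = 4 * (g ^ 2 * lam * r ^ 2) := by rw [← hg]; ring
      linarith
    have h5 := mul_nonneg (by linarith : 0 ≤ e) (h3.trans hF)
    have h6 : 0 ≤ 4 * g * lam * γ * (e - 1) := by
      have := mul_nonneg hgg (by linarith : 0 ≤ e - 1)
      linarith
    linarith
  · push Not at hc
    have he2 : 2 ≤ e := by
      have : (1 : ℝ) ≤ g * (2 * r ^ 2 - p ^ 2 - q ^ 2) := by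
        have : g * r ^ 2 ≤ g * (2 * r ^ 2 - p ^ 2 - q ^ 2) := by gcongr; linarith
        linarith
      have h7 := Real.add_one_le_exp (g * (2 * r ^ 2 - p ^ 2 - q ^ 2))
      linarith
    have h8 : - (2 * g * (lam * γ)) ≤ (A1 * (4 * g ^ 2 * p ^ 2 - 2 * g) +
        A2 * (4 * g ^ 2 * q ^ 2 - 2 * g) - 2 * g * (V1 * p + V2 * q)) := by
      have : 0 ≤ 4 * g ^ 2 * lam * (p ^ 2 + q ^ 2) := by positivity
      linarith
    have h9 := mul_le_mul_of_nonneg_left h8 (by linarith : 0 ≤ e)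
    have h10 : 0 ≤ g * (lam * γ) * (e - 2) := mul_nonneg hgg (by linarith)
    nlinarith

/-- second-order condition at a minimum of a function whose derivative is `ν * r`. -/
lemma second_order {ν f r : ℝ → ℝ} {x r' : ℝ} (hν : ∀ ξ, 0 < ν ξ)
    (hf : ∀ᶠ ξ in 𝓝 x, HasDerivAt f (ν ξ * r ξ) ξ) (hmin : IsLocalMin f x)
    (hr : HasDerivAt r r' x) : r x = 0 ∧ 0 ≤ r' := by
  have h := flux_min (k := fun ξ => (ν ξ)⁻¹) (wx := fun ξ => ν ξ * r ξ) (q := r')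
    (fun ξ => inv_pos.2 (hν ξ)) hf hmin (by
      refine hr.congr_of_eventuallyEq (Eventually.of_forall fun ξ => ?_)
      simp only
      rw [inv_mul_cancel_left₀ (hν ξ).ne'])
  refine ⟨?_, h.2⟩
  have := h.1
  exact (mul_eq_zero.1 this).resolve_left (hν x).ne'

lemma tendsto_swap_gen {X : Type*} [TopologicalSpace X] {F : ℝ → X → ℝ}
    (h : Continuous (fun Y : ℝ × X => F Y.1 Y.2)) (t : ℝ) (x : X) :
    Tendsto (fun Y : X × ℝ => F Y.2 Y.1) (𝓝 x ×ˢ 𝓝[>] t) (𝓝 (F t x)) := by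
  have h1 : Tendsto (fun Y : X × ℝ => (Y.2, Y.1)) (𝓝 x ×ˢ 𝓝[>] t) (𝓝 (t, x)) := by
    rw [nhds_prod_eq]
    exact (tendsto_snd.mono_right nhdsWithin_le_nhds).prodMk tendsto_fst
  exact (h.tendsto (t, x)).comp h1

lemma continuous_double_primitive {ν : ℝ → ℝ} {w : ℝ → ℝ → ℝ} (hνc : Continuous ν)
    (hwc : Continuous (fun p : ℝ × ℝ => w p.1 p.2)) :
    Continuous (fun Y : ℝ × (ℝ × ℝ) => ∫ ξ in Y.2.2..Y.2.1, ν ξ * w Y.1 ξ) := by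
  have e : (fun Y : ℝ × (ℝ × ℝ) => ∫ ξ in Y.2.2..Y.2.1, ν ξ * w Y.1 ξ) = fun Y =>
      (∫ ξ in (0:ℝ)..Y.2.1, ν ξ * w Y.1 ξ) - ∫ ξ in (0:ℝ)..Y.2.2, ν ξ * w Y.1 ξ := by
    funext Y
    have hc : Continuous (fun ξ => ν ξ * w Y.1 ξ) :=
      hνc.mul (hwc.comp (f := fun x => (Y.1, x)) (by fun_prop))
    exact (intervalIntegral.integral_interval_sub_left (hc.intervalIntegrable _ _)
      (hc.intervalIntegrable _ _)).symm
  rw [e]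
  have hf : Continuous (Function.uncurry fun (Y : ℝ × (ℝ × ℝ)) (ξ : ℝ) => ν ξ * w Y.1 ξ) :=
    (hνc.comp continuous_snd).mul
      (hwc.comp (f := fun Z : (ℝ × (ℝ × ℝ)) × ℝ => (Z.1.1, Z.2)) (by fun_prop))
  have c1 : Continuous (fun Y : ℝ × (ℝ × ℝ) => Y.2.1) := by fun_prop
  have c2 : Continuous (fun Y : ℝ × (ℝ × ℝ) => Y.2.2) := by fun_prop
  exact (intervalIntegral.continuous_parametric_intervalIntegral_of_continuous (a₀ := 0) hf c1).sub
    (intervalIntegral.continuous_parametric_intervalIntegral_of_continuous (a₀ := 0) hf c2)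

set_option maxHeartbeats 1000000 in
theorem barrier {ν a : ℝ → ℝ} {W lam Lam : ℝ} (hνc : Continuous ν)
    (hν : ∀ x, 0 < ν x) (hlam : 0 < lam)
    (hA1 : ∀ x, lam ≤ ν x * ν x * a x) (hA2 : ∀ x, ν x * ν x * a x ≤ Lam)
    {α β τ : ℝ} {w wt wx h : ℝ → ℝ → ℝ} (hτ : 0 < τ)
    (hwc : Continuous (fun p : ℝ × ℝ => w p.1 p.2))
    (hcc : ∀ t, Continuous (wt t) ∧ Continuous (h t))
    (hwx : ∀ t, ∀ x ∈ Ioo α β, HasDerivAt (w t) (wx t x) x ∧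
        HasDerivAt (fun ξ => ν ξ * a ξ * wx t ξ) (W * wx t x + ν x * h t x) x)
    (hintg : ∀ t x₁ x₂, HasDerivAt (fun σ => ∫ ξ in x₂..x₁, ν ξ * w σ ξ)
        (∫ ξ in x₂..x₁, ν ξ * wt t ξ) t)
    {N : ℝ → ℝ} (hN : ∀ x, HasDerivAt N (ν x) x)
    {r γ g V1 V2 k1 k2 θ ε : ℝ} (hr : 0 < r) (hγ2 : 2 ≤ γ) (hg : g * (2 * r ^ 2) = γ)
    (hγ : 2 * Lam + 2 * r * (|V1| + |V2|) ≤ lam * γ) (hθ : 0 < θ) (hε : 0 < ε)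
    (hsep : ∀ s ∈ Icc 0 τ, 2 * r ≤ (k1 + V1 * s) - (k2 + V2 * s))
    (hbox : ∀ s ∈ Icc 0 τ, k1 + V1 * s + W * s + 2 * r < N β ∧
      N α < k2 + V2 * s + W * s - 2 * r)
    (hD : ∀ s ∈ Icc 0 τ, ∀ x1 ∈ Icc α β, ∀ x2 ∈ Icc α β, x2 ≤ x1 →
      - ε ≤ ∫ ξ in x2..x1, ν ξ * w s ξ)
    (herr : ∀ s ∈ Icc 0 τ, ∀ x1 ∈ Icc α β, ∀ x2 ∈ Icc α β, x2 ≤ x1 →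
      - ε < ∫ ξ in x2..x1, ν ξ * (wt s ξ - h s ξ))
    (hinit : ∀ x1 ∈ Icc α β, ∀ x2 ∈ Icc α β, k1 - 2 * r < N x1 → N x2 < k2 + 2 * r →
      θ * Real.exp γ ≤ ∫ ξ in x2..x1, ν ξ * w 0 ξ) :
    ∀ s ∈ Ioc 0 τ, ∀ x1 ∈ Icc α β, ∀ x2 ∈ Icc α β, x2 ≤ x1 →
      θ * Real.exp (-(4 * g * lam * γ) * s) * (Real.exp (g * (2 * r ^ 2 -
        (N x1 - W * s - (k1 + V1 * s)) ^ 2 - (N x2 - W * s - (k2 + V2 * s)) ^ 2)) - 1)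
      ≤ (∫ ξ in x2..x1, ν ξ * w s ξ) + ε * (1 + s) := by
  have hgp : 0 < g := by
    by_contra! hn
    have : g * (2 * r ^ 2) ≤ 0 := mul_nonpos_of_nonpos_of_nonneg hn (by positivity)
    linarith
  have hNc : Continuous N := continuous_iff_continuousAt.2 fun x => (hN x).continuousAt
  have hNm : StrictMono N := by
    apply strictMono_of_hasDerivAt_pos hN hν
  set κ := 4 * g * lam * γ with hκ
  set p : ℝ → ℝ → ℝ := fun s x => N x - W * s - (k1 + V1 * s) with hp
  set q : ℝ → ℝ → ℝ := fun s x => N x - W * s - (k2 + V2 * s) with hq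
  set E : ℝ → ℝ → ℝ → ℝ := fun s x1 x2 =>
    Real.exp (g * (2 * r ^ 2 - (p s x1) ^ 2 - (q s x2) ^ 2)) with hE
  set Φ : ℝ → ℝ × ℝ → ℝ := fun s X => (∫ ξ in X.2..X.1, ν ξ * w s ξ) + ε * (1 + s)
    - θ * Real.exp (-κ * s) * (E s X.1 X.2 - 1) with hΦ
  set K : Set (ℝ × ℝ) := {X | X.2 ≤ X.1} ∩ (Icc α β ×ˢ Icc α β) with hK
  have hKc : IsCompact K :=
    (isCompact_Icc.prod isCompact_Icc).inter_left (isClosed_le continuous_snd continuous_fst)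
  have hΦc : Continuous (fun Y : ℝ × (ℝ × ℝ) => Φ Y.1 Y.2) := by
    have hD0 := continuous_double_primitive hνc hwc
    simp only [hΦ, hE, hp, hq]
    fun_prop
  have hlim : ∀ t X, Tendsto (fun Y : (ℝ × ℝ) × ℝ => Φ Y.2 Y.1) (𝓝 X ×ˢ 𝓝[>] t)
      (𝓝 (Φ t X)) := by
    intro t X
    exact tendsto_swap_gen hΦc t X
  -- where the barrier is positive
  have hpos : ∀ s x1 x2, 1 < E s x1 x2 → (p s x1) ^ 2 + (q s x2) ^ 2 < 2 * r ^ 2 := by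
    intro s x1 x2 h1
    have h2 := Real.one_lt_exp_iff.1 h1
    have := (mul_pos_iff_of_pos_left hgp).1 h2
    linarith
  have hneg : ∀ s ∈ Icc 0 τ, ∀ X ∈ K, Φ s X < 0 → 1 < E s X.1 X.2 := by
    intro s hs X hX hlt
    by_contra! hle
    have h1 := hD s hs X.1 hX.2.1 X.2 hX.2.2 hX.1
    have h2 : θ * Real.exp (-κ * s) * (E s X.1 X.2 - 1) ≤ 0 :=
      mul_nonpos_of_nonneg_of_nonpos (by positivity) (by linarith)
    have h3 : 0 ≤ ε * s := mul_nonneg hε.le hs.1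
    simp only [hΦ] at hlt
    linarith
  have habs : ∀ {u v : ℝ}, u ^ 2 + v ^ 2 < 2 * r ^ 2 → -(2 * r) < u ∧ u < 2 * r := by
    intro u v h
    exact abs_lt.1 (abs_lt_of_sq_lt_sq (by nlinarith [sq_nonneg v, sq_nonneg r]) (by positivity))
  have hmain : ∀ t ∈ Ioc 0 τ, ∀ X ∈ K, 0 ≤ Φ t X := by
    refine time_lemma hKc Φ ?_ ?_ ?_ ?_
    · intro t _
      exact (hΦc.comp (f := fun X => (t, X)) (by fun_prop)).continuousOn
    · rintro t ht ⟨x1, x2⟩ hX hlt hmin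
      have ht' : t ∈ Icc 0 τ := ⟨ht.1.le, ht.2⟩
      have hE1 := hneg t ht' _ hX hlt
      have hball := hpos _ _ _ hE1
      simp only at hE1 hball
      obtain ⟨p1, p2⟩ := habs hball
      obtain ⟨q1, q2⟩ := habs ((add_comm _ _).trans_lt hball)
      have hb := hbox t ht'
      have hs := hsep t ht'
      have hpq : -(2 * r) < p t x1 - q t x2 := by
        refine (abs_lt.1 (abs_lt_of_sq_lt_sq ?_ (by positivity))).1
        nlinarith [sq_nonneg (p t x1 + q t x2)]
      have hx21 : x2 < x1 := hNm.lt_iff_lt.1 (by simp only [hp, hq] at hpq; linarith)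
      have hx1β : x1 < β := hNm.lt_iff_lt.1 (by simp only [hp] at p2; linarith)
      have hx2α : α < x2 := hNm.lt_iff_lt.1 (by simp only [hq] at q1; linarith)
      have hx1 : x1 ∈ Ioo α β := ⟨hx2α.trans hx21, hx1β⟩
      have hx2 : x2 ∈ Ioo α β := ⟨hx2α, hx21.trans hx1β⟩
      have hwt : Continuous (w t) := hwc.comp (f := fun x => (t, x)) (by fun_prop)
      set c := θ * Real.exp (-κ * t) with hc
      have hcp : 0 < c := by positivity
      -- first variable
      have hdp : ∀ ξ, HasDerivAt (fun ξ => p t ξ) (ν ξ) ξ := fun ξ =>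
        ((hN ξ).sub_const _).sub_const _
      have hdq : ∀ ξ, HasDerivAt (fun ξ => q t ξ) (ν ξ) ξ := fun ξ =>
        ((hN ξ).sub_const _).sub_const _
      have hE1d : ∀ ξ, HasDerivAt (fun ξ => E t ξ x2) (ν ξ * (-2 * g * p t ξ * E t ξ x2)) ξ := by
        intro ξ
        have := (((((hdp ξ).pow 2).const_sub (2 * r ^ 2)).sub_const ((q t x2) ^ 2)).const_mul g).exp
        refine this.congr_deriv ?_
        simp only [hE, Pi.pow_apply, Pi.sub_apply]
        push_cast
        ring
      have hE2d : ∀ ξ, HasDerivAt (fun ξ => E t x1 ξ) (ν ξ * (-2 * g * q t ξ * E t x1 ξ)) ξ := by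
        intro ξ
        have := ((((hdq ξ).pow 2).const_sub (2 * r ^ 2 - (p t x1) ^ 2)).const_mul g).exp
        refine this.congr_deriv ?_
        simp only [hE, Pi.pow_apply, Pi.sub_apply]
        push_cast
        ring
      have hm1 : IsLocalMin (fun ξ => Φ t (ξ, x2)) x1 := by
        filter_upwards [Ioo_mem_nhds hx21 hx1β] with ξ hξ
        exact hmin (ξ, x2) ⟨hξ.1.le, ⟨(hx2α.trans hξ.1).le, hξ.2.le⟩, hX.2.2⟩
      have hm2 : IsLocalMin (fun ξ => Φ t (x1, ξ)) x2 := by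
        filter_upwards [Ioo_mem_nhds hx2α hx21] with ξ hξ
        exact hmin (x1, ξ) ⟨hξ.2.le, hX.2.1, ⟨hξ.1.le, (hξ.2.trans hx1β).le⟩⟩
      have hs1 := second_order (ν := ν) (r := fun ξ => w t ξ - c * (-2 * g * p t ξ * E t ξ x2))
        (r' := wx t x1 - c * (-2 * g * ν x1 * E t x1 x2 +
          -2 * g * p t x1 * (ν x1 * (-2 * g * p t x1 * E t x1 x2)))) hν ?_ hm1 ?_
      rotate_left
      · refine Eventually.of_forall fun ξ => ?_
        have h1 := hasDerivAt_primitive (hνc.mul hwt) x2 ξ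
        have h2 := (h1.add_const (ε * (1 + t))).sub (((hE1d ξ).sub_const 1).const_mul c)
        refine h2.congr_deriv ?_
        simp only [Pi.mul_apply]
        ring
      · exact (hwx t x1 hx1).1.sub ((((hdp x1).const_mul (-2 * g)).mul (hE1d x1)).const_mul c)
      have hs2 := second_order (ν := ν) (r := fun ξ => - w t ξ - c * (-2 * g * q t ξ * E t x1 ξ))
        (r' := - wx t x2 - c * (-2 * g * ν x2 * E t x1 x2 +
          -2 * g * q t x2 * (ν x2 * (-2 * g * q t x2 * E t x1 x2)))) hν ?_ hm2 ?_
      rotate_left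
      · refine Eventually.of_forall fun ξ => ?_
        have h1 := (hasDerivAt_primitive (hνc.mul hwt) x1 ξ).neg
        have h2 := (h1.add_const (ε * (1 + t))).sub (((hE2d ξ).sub_const 1).const_mul c)
        have h3 : (fun ξ => Φ t (x1, ξ)) =
            (fun y => (-fun y => ∫ (s : ℝ) in x1..y, (ν * w t) s) y + ε * (1 + t)) -
              fun y => c * (E t x1 y - 1) := by
          funext ζ
          simp only [hΦ, Pi.sub_apply, Pi.neg_apply, Pi.mul_apply]
          rw [intervalIntegral.integral_symm]
        rw [h3]
        refine h2.congr_deriv ?_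
        simp only [Pi.mul_apply]
        ring
      · exact (hwx t x2 hx2).1.neg.sub ((((hdq x2).const_mul (-2 * g)).mul (hE2d x2)).const_mul c)
      obtain ⟨f1, f2⟩ := hs1
      obtain ⟨f3, f4⟩ := hs2
      -- flux identity
      have hflux : (∫ ξ in x2..x1, ν ξ * h t ξ) =
          (ν x1 * a x1 * wx t x1 - W * w t x1) - (ν x2 * a x2 * wx t x2 - W * w t x2) := by
        refine intervalIntegral.integral_eq_sub_of_hasDerivAt
          (f := fun ξ => ν ξ * a ξ * wx t ξ - W * w t ξ) ?_
          ((hνc.mul (hcc t).2).intervalIntegrable _ _)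
        intro ξ hξ
        rw [uIcc_of_le hx21.le] at hξ
        have hξ' : ξ ∈ Ioo α β := ⟨hx2α.trans_le hξ.1, hξ.2.trans_lt hx1β⟩
        obtain ⟨d1, d2⟩ := hwx t ξ hξ'
        refine (d2.sub (d1.const_mul W)).congr_deriv ?_
        ring
      have hsplit : (∫ ξ in x2..x1, ν ξ * wt t ξ) = (∫ ξ in x2..x1, ν ξ * h t ξ) +
          ∫ ξ in x2..x1, ν ξ * (wt t ξ - h t ξ) := by
        have c1 : Continuous (fun ξ => ν ξ * h t ξ) := hνc.mul (hcc t).2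
        have c2 : Continuous (fun ξ => ν ξ * (wt t ξ - h t ξ)) :=
          hνc.mul ((hcc t).1.sub (hcc t).2)
        rw [← intervalIntegral.integral_add (c1.intervalIntegrable _ _)
          (c2.intervalIntegrable _ _)]
        congr 1
        funext ξ
        ring
      have he := herr t ht' x1 hX.2.1 x2 hX.2.2 hx21.le
      -- time derivative
      have hdps : HasDerivAt (fun s => p s x1) (-(W + V1)) t := by
        have := ((((hasDerivAt_id t).const_mul W).const_sub (N x1)).sub
          (((hasDerivAt_id t).const_mul V1).const_add k1))
        refine this.congr_deriv (by ring)
      have hdqs : HasDerivAt (fun s => q s x2) (-(W + V2)) t := by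
        have := ((((hasDerivAt_id t).const_mul W).const_sub (N x2)).sub
          (((hasDerivAt_id t).const_mul V2).const_add k2))
        refine this.congr_deriv (by ring)
      have hEs : HasDerivAt (fun s => E s x1 x2)
          (E t x1 x2 * (2 * g * (p t x1 * (W + V1) + q t x2 * (W + V2)))) t := by
        have := ((((hdps.pow 2).const_sub (2 * r ^ 2)).sub (hdqs.pow 2)).const_mul g).exp
        refine this.congr_deriv ?_
        simp only [hE, Pi.pow_apply, Pi.sub_apply]
        push_cast
        ring
      have hexp : HasDerivAt (fun s => θ * Real.exp (-κ * s)) (-κ * c) t := by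
        have := (((hasDerivAt_id t).const_mul (-κ)).exp).const_mul θ
        refine this.congr_deriv ?_
        simp only [id, hc]
        ring
      have hΦt : HasDerivAt (fun s => Φ s (x1, x2)) ((∫ ξ in x2..x1, ν ξ * wt t ξ) + ε -
          (-κ * c * (E t x1 x2 - 1) +
            c * (E t x1 x2 * (2 * g * (p t x1 * (W + V1) + q t x2 * (W + V2)))))) t := by
        have h1 := ((hintg t x1 x2).add (((hasDerivAt_id t).const_add 1).const_mul ε)).sub
          (hexp.mul (hEs.sub_const 1))
        refine h1.congr_deriv ?_
        ring
      refine eventually_lt_left hΦt ?_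
      rw [hsplit, hflux]
      have halg := barrier_alg (V1 := V1) (V2 := V2) hlam (hA1 x1) (hA2 x1) (hA1 x2) (hA2 x2)
        hr hγ2 hg hγ hball
      have halg' := mul_nonneg hcp.le halg
      have hE' : Real.exp (g * (2 * r ^ 2 - p t x1 ^ 2 - q t x2 ^ 2)) = E t x1 x2 := rfl
      rw [hE', ← hκ] at halg'
      have ha1 : 0 < ν x1 * a x1 := by
        have : 0 < ν x1 * (ν x1 * a x1) := by rw [← mul_assoc]; exact hlam.trans_le (hA1 x1)
        exact (mul_pos_iff_of_pos_left (hν x1)).1 this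
      have ha2 : 0 < ν x2 * a x2 := by
        have : 0 < ν x2 * (ν x2 * a x2) := by rw [← mul_assoc]; exact hlam.trans_le (hA1 x2)
        exact (mul_pos_iff_of_pos_left (hν x2)).1 this
      have g1 := mul_nonneg ha1.le f2
      have g2 := mul_nonneg ha2.le f4
      have w1 : w t x1 = c * (-2 * g * p t x1 * E t x1 x2) := by linarith
      have w2 : w t x2 = - (c * (-2 * g * q t x2 * E t x1 x2)) := by linarith
      rw [w1, w2]
      linarith only [halg', g1, g2, he]
    · intro t ht X hX r' hr'
      filter_upwards [(hlim t X).eventually (lt_mem_nhds hr')] with Y hY _ using hY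
    · intro X hX r' hr'
      have h0 : 0 ≤ Φ 0 X := by
        by_contra! hlt
        have h0τ : (0 : ℝ) ∈ Icc 0 τ := ⟨le_rfl, hτ.le⟩
        have hball := hpos _ _ _ (hneg 0 h0τ X hX hlt)
        obtain ⟨p1, p2⟩ := habs hball
        obtain ⟨q1, q2⟩ := habs ((add_comm _ _).trans_lt hball)
        simp only [hp, hq] at p1 q2
        have h1 := hinit X.1 hX.2.1 X.2 hX.2.2 (by linarith) (by linarith)
        have h2 : E 0 X.1 X.2 ≤ Real.exp γ := by
          apply Real.exp_le_exp.2
          rw [← hg]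
          gcongr
          nlinarith [sq_nonneg (p 0 X.1), sq_nonneg (q 0 X.2)]
        have h3 : θ * E 0 X.1 X.2 ≤ θ * Real.exp γ := by gcongr
        simp only [hΦ, mul_zero, Real.exp_zero, mul_one, add_zero] at hlt
        linarith
      filter_upwards [(hlim 0 X).eventually (lt_mem_nhds (hr'.trans_le h0))] with Y hY _ using hY
  intro s hs x1 hx1 x2 hx2 hle
  have := hmain s hs (x1, x2) ⟨hle, hx1, hx2⟩
  simp only [hΦ] at this
  linarith


lemma integral_mono_shift {ν v v' : ℝ → ℝ} {x1 x2 α β δ : ℝ} (hνc : Continuous ν)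
    (hν : ∀ x, 0 < ν x) (hv : Continuous v) (hv' : Continuous v') (hx1 : x1 ∈ Icc α β)
    (hx2 : x2 ∈ Icc α β) (hle : x2 ≤ x1) (hδ : 0 ≤ δ)
    (h : ∀ x ∈ Icc α β, v x - δ ≤ v' x) :
    (∫ ξ in x2..x1, ν ξ * v ξ) - δ * (∫ ξ in α..β, ν ξ) ≤ ∫ ξ in x2..x1, ν ξ * v' ξ := by
  have c1 : Continuous (fun ξ => ν ξ * v ξ) := hνc.mul hv
  have c2 : Continuous (fun ξ => ν ξ * v' ξ) := hνc.mul hv'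
  have c3 : Continuous (fun ξ => δ * ν ξ) := by fun_prop
  have h1 : (∫ ξ in x2..x1, (ν ξ * v ξ - δ * ν ξ)) ≤ ∫ ξ in x2..x1, ν ξ * v' ξ := by
    refine intervalIntegral.integral_mono_on hle ((c1.sub c3).intervalIntegrable _ _)
      (c2.intervalIntegrable _ _) ?_
    intro ξ hξ
    have := mul_le_mul_of_nonneg_left (h ξ ⟨hx2.1.trans hξ.1, hξ.2.trans hx1.2⟩) (hν ξ).le
    linarith
  rw [intervalIntegral.integral_sub (c1.intervalIntegrable _ _) (c3.intervalIntegrable _ _),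
    intervalIntegral.integral_const_mul] at h1
  have h2 : (∫ ξ in x2..x1, ν ξ) ≤ ∫ ξ in α..β, ν ξ := by
    refine intervalIntegral.integral_mono_interval hx2.1 hle hx1.2 ?_
      (hνc.intervalIntegrable _ _)
    exact Eventually.of_forall fun ξ => (hν ξ).le
  have := mul_le_mul_of_nonneg_left h2 hδ
  linarith

theorem mass_limit {ν a : ℝ → ℝ} {W lam Lam : ℝ} (hνc : Continuous ν) (hac : Continuous a)
    (hν : ∀ x, 0 < ν x) (ha : ∀ x, 0 < a x) (hlam : 0 < lam)
    (hA1 : ∀ x, lam ≤ ν x * ν x * a x) (hA2 : ∀ x, ν x * ν x * a x ≤ Lam)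
    {N : ℝ → ℝ} (hN : ∀ x, HasDerivAt N (ν x) x) (hNtop : Tendsto N atTop atTop)
    (hNbot : Tendsto N atBot atBot)
    {u ut ux q : ℝ → ℝ → ℝ}
    (hu : ∀ t, 0 < t → ∀ x, 0 ≤ u t x)
    (hsol : ∀ t, 0 < t → ∀ x : ℝ, HasDerivAt (fun τ => u τ x) (ut t x) t ∧
      HasDerivAt (fun ξ => u t ξ) (ux t x) x ∧
      HasDerivAt (fun ξ => ν ξ * a ξ * ux t ξ) (q t x) x ∧
      ν x * ut t x - q t x + W * ux t x = 0)
    (hFL : ∀ t, 0 < t → ∀ x, FutureLsc u t x)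
    {s τ : ℝ} (hs : 0 < s) (hτ : 0 < τ) {f : ℝ →ᵇ ℝ} {r m : ℝ} (hr : 0 < r)
    (hf0 : ∀ x, 0 ≤ f x) (hfu : ∀ x, f x ≤ u s x) (hfs : ∀ x, r ≤ |N x| → f x = 0)
    (hm : ∀ x1 x2, r ≤ N x1 → N x2 ≤ - r → m ≤ ∫ ξ in x2..x1, ν ξ * f ξ)
    {γ g V1 V2 θ : ℝ} (hγ2 : 2 ≤ γ) (hg : g * (2 * r ^ 2) = γ)
    (hγ : 2 * Lam + 2 * r * (|V1| + |V2|) ≤ lam * γ) (hθ : 0 < θ) (hθm : θ * Real.exp γ < m)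
    (hsep : ∀ s ∈ Icc 0 τ, 2 * r ≤ (3 * r + V1 * s) - (- 3 * r + V2 * s)) :
    ∀ x1 x2, x2 ≤ x1 →
      θ * Real.exp (-(4 * g * lam * γ) * τ) * (Real.exp (g * (2 * r ^ 2 -
        (N x1 - W * τ - (3 * r + V1 * τ)) ^ 2 - (N x2 - W * τ - (- 3 * r + V2 * τ)) ^ 2)) - 1)
      ≤ ∫ ξ in x2..x1, ν ξ * u (s + τ) ξ := by
  intro x1 x2 hle
  have hNc : Continuous N := continuous_iff_continuousAt.2 fun x => (hN x).continuousAt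
  -- the box
  set Q := 6 * r + (|V1| + |V2| + |W|) * τ with hQ
  obtain ⟨β, hβN, hβ1⟩ := ((hNtop.eventually (eventually_gt_atTop Q)).and
    (eventually_gt_atTop (max x1 0))).exists
  obtain ⟨α, hαN, hα1⟩ := ((hNbot.eventually (eventually_lt_atBot (-Q))).and
    (eventually_lt_atBot (min x2 0))).exists
  have hβx : x1 < β := (le_max_left _ _).trans_lt hβ1
  have hαx : α < x2 := hα1.trans_le (min_le_left _ _)
  have hαβ : α < β := hαx.trans (hle.trans_lt hβx)
  have hx1 : x1 ∈ Icc α β := ⟨(hαx.trans_le hle).le, hβx.le⟩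
  have hx2 : x2 ∈ Icc α β := ⟨hαx.le, (hle.trans_lt hβx).le⟩
  have hQr : r < Q := by
    have : 0 ≤ (|V1| + |V2| + |W|) * τ := by positivity
    linarith
  have hNm : StrictMono N := strictMono_of_hasDerivAt_pos hN hν
  have hf : ∀ x, x ∉ Ioo α β → f x = 0 := by
    intro x hx
    apply hfs
    by_cases h1 : α < x
    · have h2 : β ≤ x := by
        by_contra! h
        exact hx ⟨h1, h⟩
      have := hNm.monotone h2
      exact le_trans (by linarith) (le_abs_self _)
    · have := hNm.monotone (not_lt.1 h1)
      exact le_trans (by linarith) (neg_le_abs _)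
  have hbound : ∀ V : ℝ, ∀ s ∈ Icc 0 τ, |V * s| ≤ |V| * τ := by
    intro V s hs
    rw [abs_mul, abs_of_nonneg hs.1]
    exact mul_le_mul_of_nonneg_left hs.2 (abs_nonneg V)
  set M := ∫ ξ in α..β, ν ξ with hM
  have hM0 : 0 ≤ M := intervalIntegral.integral_nonneg hαβ.le fun x _ => (hν x).le
  refine le_of_forall_pos_le_add fun ε' hε' => ?_
  obtain ⟨ε, hε, hεm, hεε⟩ : ∃ ε > 0, ε ≤ m - θ * Real.exp γ ∧ ε * (2 + τ) ≤ ε' := by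
    refine ⟨min (m - θ * Real.exp γ) (ε' / (2 + τ)), lt_min (by linarith) (by positivity),
      min_le_left _ _, ?_⟩
    rw [← le_div_iff₀ (by positivity)]
    exact min_le_right _ _
  set η := ε / (2 * (1 + 2 * τ) * (M + 1)) with hη
  have hηp : 0 < η := by positivity
  have hη1 : (η + 2 * η * τ) * (M + 1) = ε / 2 := by
    rw [hη]; field_simp
  have hη2 : (η + 2 * η * τ) * M ≤ ε / 2 := by
    rw [← hη1]; gcongr; linarith
  have hη3 : η * M ≤ ε / 2 := by
    refine le_trans ?_ hη2
    gcongr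
    have : 0 ≤ η * τ := by positivity
    linarith
  obtain ⟨w, wt, wx, h, hwc, hw0, hwf, hcc, hwt, hwx, hwe, hintg⟩ :=
    approx_solution (W := W) hνc hac hν ha hαβ hf hηp
  have hwct : ∀ t, Continuous (w t) := fun t =>
    hwc.comp (f := fun x => (t, x)) (by fun_prop)
  have hα0 : ∀ t, w t α = 0 := fun t => hw0 t α fun h => lt_irrefl _ h.1
  have hβ0 : ∀ t, w t β = 0 := fun t => hw0 t β fun h => lt_irrefl _ h.2
  have hlow : ∀ t ∈ Icc 0 τ, ∀ x ∈ Icc α β, - (η + 2 * η * τ) ≤ w t x := by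
    intro t ht x hx
    have hητ : 0 ≤ η * τ := by positivity
    rcases ht.1.eq_or_lt with h0 | h0
    · subst h0
      have := (abs_le.1 (hwf x)).1
      have := hf0 x
      linarith
    · have h1 := almost_nonneg (W := W) (τ := τ) (ε := η) (e := 2 * η) hν ha hηp.le
        (by positivity) hwc (fun t ht x hx => ⟨hwt t x, (hwx t x hx).1, (hwx t x hx).2, by
          have := (abs_le.1 (hwe t ht x)).1
          linarith⟩) (fun t _ => by rw [hα0, hβ0]; exact ⟨le_rfl, le_rfl⟩) (fun x _ => by
          have := (abs_le.1 (hwf x)).1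
          have := hf0 x
          linarith) t ⟨h0, ht.2⟩ x hx
      have : η * t ≤ η * τ := by gcongr; exact ht.2
      linarith
  have hup : ∀ x ∈ Icc α β, w τ x - (η + 2 * η * τ) ≤ u (s + τ) x := by
    intro x hx
    have h1 := comparison (W := W) (τ := τ) (ε := η) (e := 2 * η) hν ha hu hsol hFL hs hηp.le
        (by positivity) hwc (fun t ht x hx => ⟨hwt t x, (hwx t x hx).1, (hwx t x hx).2, by
          have := (abs_le.1 (hwe t ht x)).2
          linarith⟩) (fun t _ => by rw [hα0, hβ0]; exact ⟨le_rfl, le_rfl⟩) (fun x _ => by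
          have := (abs_le.1 (hwf x)).2
          have := hfu x
          linarith) τ ⟨hτ, le_rfl⟩ x hx
    linarith
  have hucont : Continuous (u (s + τ)) := continuous_iff_continuousAt.2 fun x =>
    (hsol (s + τ) (by linarith) x).2.1.continuousAt
  have hδ0 : 0 ≤ η + 2 * η * τ := by positivity
  have hB := barrier (W := W) (k1 := 3 * r) (k2 := - 3 * r) (ε := ε) hνc hν hlam hA1 hA2 hτ hwc
    hcc hwx hintg hN hr hγ2 hg hγ hθ hε hsep ?_ ?_ ?_ ?_ τ ⟨hτ, le_rfl⟩ x1 hx1 x2 hx2 hle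
  · have h1 := integral_mono_shift hνc hν (hwct τ) hucont hx1 hx2 hle hδ0 hup
    linarith
  · intro s hs
    have b1 := abs_le.1 (hbound V1 s hs)
    have b2 := abs_le.1 (hbound V2 s hs)
    have b3 := abs_le.1 (hbound W s hs)
    have n1 : 0 ≤ |V1| * τ := by positivity
    have n2 : 0 ≤ |V2| * τ := by positivity
    constructor <;> linarith [b1.1, b1.2, b2.1, b2.2, b3.1, b3.2]
  · intro t ht y1 hy1 y2 hy2 hy
    have h1 := integral_mono_shift (v := fun _ => 0) hνc hν continuous_const (hwct t) hy1 hy2 hy hδ0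
      (fun x hx => by linarith [hlow t ht x hx])
    simp only [mul_zero, intervalIntegral.integral_zero] at h1
    linarith
  · intro t ht y1 hy1 y2 hy2 hy
    have h1 := integral_mono_shift (v := fun _ => 0) (v' := fun x => wt t x - h t x) hνc hν
      continuous_const ((hcc t).1.sub (hcc t).2) hy1 hy2 hy hηp.le
      (fun x hx => by linarith [(abs_le.1 (hwe t ht.1 x)).1])
    simp only [mul_zero, intervalIntegral.integral_zero] at h1
    linarith
  · intro y1 hy1 y2 hy2 h1 h2
    have hy : y2 ≤ y1 := (hNm.lt_iff_lt.1 (by linarith : N y2 < N y1)).le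
    have h3 := integral_mono_shift hνc hν f.continuous (hwct 0) hy1 hy2 hy hηp.le
      (fun x hx => by linarith [(abs_le.1 (hwf x)).1])
    have h4 := hm y1 y2 (by linarith) (by linarith)
    linarith

theorem point_bound {ν a : ℝ → ℝ} {W lam Lam : ℝ} (hνc : Continuous ν) (hac : Continuous a)
    (hν : ∀ x, 0 < ν x) (ha : ∀ x, 0 < a x) (hlam : 0 < lam)
    (hA1 : ∀ x, lam ≤ ν x * ν x * a x) (hA2 : ∀ x, ν x * ν x * a x ≤ Lam)
    {N : ℝ → ℝ} (hN : ∀ x, HasDerivAt N (ν x) x) (hNtop : Tendsto N atTop atTop)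
    (hNbot : Tendsto N atBot atBot)
    {u ut ux q : ℝ → ℝ → ℝ}
    (hu : ∀ t, 0 < t → ∀ x, 0 ≤ u t x)
    (hsol : ∀ t, 0 < t → ∀ x : ℝ, HasDerivAt (fun τ => u τ x) (ut t x) t ∧
      HasDerivAt (fun ξ => u t ξ) (ux t x) x ∧
      HasDerivAt (fun ξ => ν ξ * a ξ * ux t ξ) (q t x) x ∧
      ν x * ut t x - q t x + W * ux t x = 0)
    (hFL : ∀ t, 0 < t → ∀ x, FutureLsc u t x)
    {s τ : ℝ} (hs : 0 < s) (hτ : 0 < τ) {f : ℝ →ᵇ ℝ} {r m : ℝ} (hr : 0 < r)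
    (hf0 : ∀ x, 0 ≤ f x) (hfu : ∀ x, f x ≤ u s x) (hfs : ∀ x, r ≤ |N x| → f x = 0)
    (hm : ∀ x1 x2, r ≤ N x1 → N x2 ≤ - r → m ≤ ∫ ξ in x2..x1, ν ξ * f ξ)
    (x : ℝ) {γ θ : ℝ} (hγ2 : 2 ≤ γ)
    (hγ : 2 * Lam + 2 * r * ((2 * |N x - W * τ| + 4 * r) / τ) ≤ lam * γ)
    (hθ : 0 < θ) (hθm : θ * Real.exp γ < m) :
    θ * Real.exp (-(2 * lam * γ ^ 2 / r ^ 2) * τ) * (γ / r) ≤ u (s + τ) x := by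
  set Z := N x - W * τ with hZ
  set V1 := (Z - 2 * r) / τ with hV1
  set V2 := (Z + 2 * r) / τ with hV2
  set g := γ / (2 * r ^ 2) with hgd
  have hV1τ : V1 * τ = Z - 2 * r := by rw [hV1]; field_simp
  have hV2τ : V2 * τ = Z + 2 * r := by rw [hV2]; field_simp
  have hV : |V1| + |V2| ≤ (2 * |Z| + 4 * r) / τ := by
    rw [hV1, hV2, abs_div, abs_div, abs_of_pos hτ, ← add_div]
    refine div_le_div_of_nonneg_right ?_ hτ.le
    have h1 : |Z - 2 * r| ≤ |Z| + 2 * r := by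
      have := abs_sub Z (2 * r)
      rwa [abs_of_pos (by positivity : 0 < 2 * r)] at this
    have h2 : |Z + 2 * r| ≤ |Z| + 2 * r := by
      have := abs_add_le Z (2 * r)
      rwa [abs_of_pos (by positivity : 0 < 2 * r)] at this
    linarith
  have hg : g * (2 * r ^ 2) = γ := by rw [hgd]; field_simp
  have hmass := mass_limit hνc hac hν ha hlam hA1 hA2 hN hNtop hNbot hu hsol hFL hs hτ hr hf0 hfu
    hfs hm (V1 := V1) (V2 := V2) hγ2 hg
    (le_trans (by gcongr) hγ) hθ hθm (by
      intro s hs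
      have h1 : V2 - V1 = 4 * r / τ := by rw [hV1, hV2]; field_simp; ring
      have h2 : (V2 - V1) * s ≤ 4 * r := by
        rw [h1, div_mul_eq_mul_div, div_le_iff₀ hτ]
        have := hs.2
        gcongr
      linarith)
  set c := θ * Real.exp (-(4 * g * lam * γ) * τ) with hc
  have hc' : θ * Real.exp (-(2 * lam * γ ^ 2 / r ^ 2) * τ) = c := by
    rw [hc, hgd]
    congr 3
    field_simp
    ring
  rw [hc']
  have hgr : γ / r = 2 * g * r := by rw [hgd]; field_simp
  rw [hgr]
  have hucont : Continuous (u (s + τ)) := continuous_iff_continuousAt.2 fun x =>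
    (hsol (s + τ) (by linarith) x).2.1.continuousAt
  have e1 : N x - W * τ - (3 * r + V1 * τ) = - r := by rw [hV1τ]; ring
  have e2 : N x - W * τ - (- 3 * r + V2 * τ) = r := by rw [hV2τ]; ring
  set F : ℝ → ℝ := fun ξ => (∫ z in x..ξ, ν z * u (s + τ) z) - c * (Real.exp (g * (2 * r ^ 2 -
        (N ξ - W * τ - (3 * r + V1 * τ)) ^ 2 - (N x - W * τ - (- 3 * r + V2 * τ)) ^ 2)) - 1)
    with hF
  have hF0 : F x = 0 := by
    simp only [hF, e1, e2, intervalIntegral.integral_same]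
    have : g * (2 * r ^ 2 - (-r) ^ 2 - r ^ 2) = 0 := by ring
    rw [this, Real.exp_zero]
    ring
  have hFp : ∀ ξ, x ≤ ξ → 0 ≤ F ξ := fun ξ hξ => sub_nonneg.2 (hmass ξ x hξ)
  have hFd : HasDerivAt F (ν x * u (s + τ) x - c * (ν x * (2 * g * r))) x := by
    have c1 : Continuous (fun z => ν z * u (s + τ) z) := hνc.mul hucont
    have h1 := hasDerivAt_primitive c1 x x
    have hd := ((hN x).sub_const (W * τ)).sub_const (3 * r + V1 * τ)
    have h2 := (((((hd.fun_pow 2).const_sub (2 * r ^ 2)).sub_const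
      ((N x - W * τ - (- 3 * r + V2 * τ)) ^ 2)).const_mul g).exp.sub_const 1).const_mul c
    refine (h1.sub h2).congr_deriv ?_
    rw [e1, e2]
    have : g * (2 * r ^ 2 - (-r) ^ 2 - r ^ 2) = 0 := by ring
    rw [this, Real.exp_zero]
    push_cast
    ring
  have hge : 0 ≤ ν x * u (s + τ) x - c * (ν x * (2 * g * r)) := by
    by_contra! hlt
    have := (hasDerivAt_iff_tendsto_slope.1 hFd).eventually (gt_mem_nhds hlt)
    have h2 : ∀ᶠ ξ in 𝓝[>] x, slope F x ξ < 0 :=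
      this.filter_mono (nhdsWithin_mono _ (fun y hy => ne_of_gt hy))
    obtain ⟨ξ, h3, h4⟩ := (h2.and self_mem_nhdsWithin).exists
    rw [slope_def_field, hF0, sub_zero] at h3
    exact absurd h3 (not_lt.2 (div_nonneg (hFp ξ (le_of_lt h4)) (sub_nonneg.2 (le_of_lt h4))))
  have : 0 ≤ ν x * (u (s + τ) x - c * (2 * g * r)) := by linarith
  have := nonneg_of_mul_nonneg_right this (hν x)
  linarith


lemma fund_bound {μ : ℝ} (hμ : 1 ≤ μ) {ν a : ℝ → ℝ} (hνc : Continuous ν) (hac : Continuous a)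
    (hνe : Elliptic μ ν) (hae : Elliptic μ a) {W : ℝ} (hW : 0 ≤ W) {P : ℝ → ℝ → ℝ → ℝ}
    (hP : IsFundSol ν a W P) {t : ℝ} (ht : 0 < t) (x y : ℝ) {γ : ℝ}
    (hγ : γ = (2 * μ ^ 3 + 24 + 8 * (|(∫ ξ in y..x, ν ξ) - W * t| / Real.sqrt t)) * μ ^ 3) :
    1 / (2 * Real.sqrt t) * Real.exp (- γ - 2 * γ ^ 2) ≤ P t x y := by
  have hμ0 : 0 < μ := by linarith
  have hν1 : ∀ x, μ⁻¹ ≤ ν x := fun x => by simpa using (hνe x).1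
  have ha1 : ∀ x, μ⁻¹ ≤ a x := fun x => by simpa using (hae x).1
  have hi : 0 < μ⁻¹ := inv_pos.2 hμ0
  have hν : ∀ x, 0 < ν x := fun x => hi.trans_le (hν1 x)
  have ha : ∀ x, 0 < a x := fun x => hi.trans_le (ha1 x)
  have hA1 : ∀ x, (μ ^ 3)⁻¹ ≤ ν x * ν x * a x := by
    intro x
    have : (μ ^ 3)⁻¹ = μ⁻¹ * μ⁻¹ * μ⁻¹ := by field_simp
    rw [this]
    have h1 := hν x
    gcongr
    · exact hν1 x
    · exact hν1 x
    · exact ha1 x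
  have hA2 : ∀ x, ν x * ν x * a x ≤ μ ^ 3 := by
    intro x
    have : μ ^ 3 = μ * μ * μ := by ring
    rw [this]
    have h1 := hν x
    have h2 := ha x
    gcongr
    · exact (hνe x).2
    · exact (hνe x).2
    · exact (hae x).2
  have hn : ∀ x, μ⁻¹ * μ⁻¹ ≤ ν x * a x := by
    intro x
    have h1 := hν x
    gcongr
    · exact hν1 x
    · exact ha1 x
  have hlam : 0 < (μ ^ 3)⁻¹ := by positivity
  set N : ℝ → ℝ := fun ξ => ∫ z in y..ξ, ν z with hNdef
  have hN : ∀ x, HasDerivAt N (ν x) x := hasDerivAt_primitive hνc y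
  have hNc : Continuous N := continuous_iff_continuousAt.2 fun x => (hN x).continuousAt
  have hNy : N y = 0 := intervalIntegral.integral_same
  have hNlow : ∀ ξ, y ≤ ξ → μ⁻¹ * (ξ - y) ≤ N ξ := by
    intro ξ hξ
    have := intervalIntegral.integral_mono_on hξ
      (continuous_const.intervalIntegrable (μ := volume) y ξ) (hνc.intervalIntegrable _ _)
      (fun z _ => hν1 z)
    rw [intervalIntegral.integral_const, smul_eq_mul] at this
    linarith
  have hNup : ∀ ξ, ξ ≤ y → N ξ ≤ μ⁻¹ * (ξ - y) := by
    intro ξ hξ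
    have := intervalIntegral.integral_mono_on hξ
      (continuous_const.intervalIntegrable (μ := volume) ξ y) (hνc.intervalIntegrable _ _)
      (fun z _ => hν1 z)
    rw [intervalIntegral.integral_const, smul_eq_mul] at this
    simp only [hNdef]
    rw [intervalIntegral.integral_symm]
    linarith
  have hNtop : Tendsto N atTop atTop := by
    refine tendsto_atTop_mono' atTop (f₁ := fun ξ => μ⁻¹ * (ξ - y)) ?_ ?_
    · filter_upwards [eventually_ge_atTop y] with ξ hξ using hNlow ξ hξ
    · exact (tendsto_atTop_add_const_right atTop (-y) tendsto_id).const_mul_atTop hi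
  have hNbot : Tendsto N atBot atBot := by
    refine tendsto_atBot_mono' (f₂ := N) (f₁ := fun ξ => μ⁻¹ * (ξ - y)) atBot ?_ ?_
    · filter_upwards [eventually_le_atBot y] with ξ hξ using hNup ξ hξ
    · exact (tendsto_atBot_add_const_right atBot (-y) tendsto_id).const_mul_atBot hi
  have hNm : StrictMono N := strictMono_of_hasDerivAt_pos hN hν
  obtain ⟨hP1, hP2, -, hP4, -⟩ := hP
  obtain ⟨ut, ux, q, hsol0⟩ := hP1 y
  have hsol : ∀ t, 0 < t → ∀ x : ℝ, HasDerivAt (fun τ => P τ x y) (ut t x) t ∧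
      HasDerivAt (fun ξ => P t ξ y) (ux t x) x ∧
      HasDerivAt (fun ξ => ν ξ * a ξ * ux t ξ) (q t x) x ∧
      ν x * ut t x - q t x + W * ux t x = 0 := fun t ht x => hsol0 t ht x
  have hu : ∀ t, 0 < t → ∀ x, 0 ≤ P t x y := fun t ht x => hP2 y t ht x
  have hFL := future_lsc (W := W) (u := fun t x => P t x y) hνc hac hν ha hlam (mul_pos hi hi)
    hA1 hA2 hn hu hsol
  set r := Real.sqrt t with hrdef
  have hr : 0 < r := Real.sqrt_pos.2 ht
  have hr2 : r ^ 2 = t := Real.sq_sqrt ht.le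
  set φ : ℝ → ℝ := fun ξ => max 0 (1 - |N ξ| / r) with hφ
  have hφc : Continuous φ := by simp only [hφ]; fun_prop
  have hφ0 : ∀ ξ, 0 ≤ φ ξ := fun ξ => le_max_left _ _
  have hφ1 : ∀ ξ, φ ξ ≤ 1 := fun ξ => max_le zero_le_one (by
    have : 0 ≤ |N ξ| / r := by positivity
    linarith)
  have hφs : ∀ ξ, r ≤ |N ξ| → φ ξ = 0 := by
    intro ξ h
    apply max_eq_left
    have : 1 ≤ |N ξ| / r := (one_le_div hr).2 h
    linarith
  have hφy : φ y = 1 := by simp [hφ, hNy]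
  have hconv := hP4 y φ hφc ⟨1, fun ξ => by rw [abs_of_nonneg (hφ0 ξ)]; exact hφ1 ξ⟩
  rw [hφy] at hconv
  have hev := hconv.eventually (lt_mem_nhds (show (1 / 2 : ℝ) < 1 by norm_num))
  have hs0 : ∀ᶠ s in 𝓝[>] (0 : ℝ), s < t / 2 :=
    mem_nhdsWithin_of_mem_nhds (gt_mem_nhds (by positivity))
  have hs1 : ∀ᶠ s in 𝓝[>] (0 : ℝ), W * s < r := by
    have : Tendsto (fun s : ℝ => W * s) (𝓝 0) (𝓝 (W * 0)) :=
      (continuous_const.mul continuous_id).tendsto 0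
    rw [mul_zero] at this
    exact (this.eventually (gt_mem_nhds hr)).filter_mono nhdsWithin_le_nhds
  obtain ⟨s, ⟨⟨hmass, hst⟩, hWs⟩, hspos⟩ :=
    (((hev.and hs0).and hs1).and self_mem_nhdsWithin).exists
  have hs : 0 < s := hspos
  have hPs : Continuous (fun ξ => P s ξ y) := continuous_iff_continuousAt.2 fun ξ =>
    (hsol s hs ξ).2.1.continuousAt
  have hfc : Continuous (fun ξ => P s ξ y * φ ξ) := hPs.mul hφc
  obtain ⟨b, hb⟩ : ∃ b, ∀ ξ, ‖P s ξ y * φ ξ‖ ≤ b := by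
    obtain ⟨β, hβ⟩ := (hNtop.eventually (eventually_ge_atTop r)).exists
    obtain ⟨α, hα⟩ := (hNbot.eventually (eventually_le_atBot (-r))).exists
    have hcs : HasCompactSupport (fun ξ => P s ξ y * φ ξ) := by
      refine HasCompactSupport.intro (isCompact_Icc (a := α) (b := β)) ?_
      intro ξ hξ
      rw [hφs, mul_zero]
      by_cases h1 : α ≤ ξ
      · have h2 : β ≤ ξ := by
          by_contra! h
          exact hξ ⟨h1, h.le⟩
        exact (hβ.trans (hNm.monotone h2)).trans (le_abs_self _)
      · have := hNm.monotone (not_le.1 h1).le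
        exact le_trans (by linarith) (neg_le_abs _)
    exact hcs.exists_bound_of_continuous hfc
  let f : ℝ →ᵇ ℝ := BoundedContinuousFunction.ofNormedAddCommGroup _ hfc b hb
  have hfe : ∀ ξ, f ξ = P s ξ y * φ ξ := fun ξ => rfl
  set τ := t - s with hτ
  have hτp : 0 < τ := by linarith
  have hτ2 : t / 2 ≤ τ := by linarith
  have hμ3 : 1 ≤ μ ^ 3 := one_le_pow₀ hμ
  set ζ := |N x - W * t| / r with hζ
  have hζ0 : 0 ≤ ζ := by positivity
  have hγ' : γ = (2 * μ ^ 3 + 24 + 8 * ζ) * μ ^ 3 := hγ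
  have hγ2 : 2 ≤ γ := by rw [hγ']; nlinarith
  have key := point_bound (u := fun t x => P t x y) (r := r) (m := 1 / 2) (f := f) (γ := γ)
    (θ := Real.exp (-γ) / 4) (τ := τ) hνc hac hν ha hlam hA1 hA2 hN hNtop hNbot hu hsol hFL hs hτp
    hr (fun ξ => mul_nonneg (hu s hs ξ) (hφ0 ξ))
    (fun ξ => mul_le_of_le_one_right (hu s hs ξ) (hφ1 ξ))
    (fun ξ h => by rw [hfe, hφs ξ h, mul_zero]) ?_ x hγ2 ?_ (by positivity) ?_
  · have e1 : s + τ = t := by rw [hτ]; ring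
    simp only [e1] at key
    refine le_trans ?_ key
    have h1 : Real.exp (- γ - 2 * γ ^ 2) = Real.exp (-γ) * Real.exp (-(2 * γ ^ 2)) := by
      rw [← Real.exp_add]; ring_nf
    have h2 : Real.exp (-(2 * γ ^ 2)) ≤ Real.exp (-(2 * (μ ^ 3)⁻¹ * γ ^ 2 / r ^ 2) * τ) := by
      apply Real.exp_le_exp.2
      rw [neg_mul, neg_le_neg_iff, hr2, div_mul_eq_mul_div, div_le_iff₀ ht]
      have : (μ ^ 3)⁻¹ ≤ 1 := inv_le_one_of_one_le₀ hμ3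
      calc 2 * (μ ^ 3)⁻¹ * γ ^ 2 * τ ≤ 2 * 1 * γ ^ 2 * t := by gcongr; linarith
        _ = _ := by ring
    rw [h1]
    calc 1 / (2 * r) * (Real.exp (-γ) * Real.exp (-(2 * γ ^ 2)))
        = Real.exp (-γ) / 4 * Real.exp (-(2 * γ ^ 2)) * (2 / r) := by field_simp; ring
      _ ≤ _ := by gcongr
  · intro x1 x2 h1 h2
    have hsub : Function.support (fun ξ => ν ξ * f ξ) ⊆ Ioc x2 x1 := by
      intro ξ hξ
      by_contra hn
      apply hξ
      simp only [hfe]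
      rw [hφs, mul_zero, mul_zero]
      by_cases h3 : x2 < ξ
      · have h4 : x1 ≤ ξ := by
          by_contra! h
          exact hn ⟨h3, h.le⟩
        exact (h1.trans (hNm.monotone h4)).trans (le_abs_self _)
      · have := hNm.monotone (not_lt.1 h3)
        exact le_trans (by linarith) (neg_le_abs _)
    rw [intervalIntegral.integral_eq_integral_of_support_subset hsub]
    simp only [hfe, ← mul_assoc]
    exact hmass.le
  · have hmul : (μ ^ 3)⁻¹ * γ = 2 * μ ^ 3 + 24 + 8 * ζ := by rw [hγ']; field_simp
    rw [hmul]
    have hZ : |N x - W * τ| ≤ |N x - W * t| + r := by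
      have e : N x - W * τ = (N x - W * t) + W * s := by rw [hτ]; ring
      rw [e]
      refine (abs_add_le _ _).trans ?_
      rw [abs_of_nonneg (mul_nonneg hW hs.le)]
      linarith
    have h1 : (2 * |N x - W * τ| + 4 * r) / τ ≤ (2 * |N x - W * t| + 6 * r) / (t / 2) := by
      apply div_le_div₀ (by positivity) (by linarith) (by positivity) hτ2
    have h2 : 2 * r * ((2 * |N x - W * t| + 6 * r) / (t / 2)) = 24 + 8 * ζ := by
      rw [hζ, ← hr2]
      field_simp
      ring
    have h3 : 2 * r * ((2 * |N x - W * τ| + 4 * r) / τ) ≤ 24 + 8 * ζ := by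
      rw [← h2]; gcongr
    linarith
  · have : Real.exp (-γ) / 4 * Real.exp γ = 1 / 4 := by
      rw [div_mul_eq_mul_div, ← Real.exp_add]; simp
    rw [this]; norm_num

lemma corrector_compare {μ : ℝ} (hμ : 1 ≤ μ) {ν a : ℝ → ℝ} (hνc : Continuous ν)
    (hνe : Elliptic μ ν) (hae : Elliptic μ a) {W : ℝ} (hW : 0 ≤ W) {T : ℝ → ℝ}
    (hT : IsCorrector μ ν a W T) {t : ℝ} (ht : 0 < t) (x y : ℝ) :
    |(∫ ξ in y..x, ν ξ) - W * t| ≤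
      (μ ^ 7 + 1) * (|T x - T y - W * t| + Real.sqrt t) := by
  have hμ0 : 0 < μ := by linarith
  obtain ⟨-, T', hT1, hT2, hT3⟩ := hT
  set N : ℝ → ℝ := fun ξ => ∫ z in y..ξ, ν z with hNdef
  have hN : ∀ x, HasDerivAt N (ν x) x := hasDerivAt_primitive hνc y
  have hNy : N y = 0 := intervalIntegral.integral_same
  have hi : 0 < μ⁻¹ := inv_pos.2 hμ0
  have hν : ∀ x, 0 < ν x := fun x => hi.trans_le (by simpa using (hνe x).1)
  have ha : ∀ x, 0 < a x := fun x => hi.trans_le (by simpa using (hae x).1)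
  have hT0 : ∀ x, 0 < T' x := fun x => lt_of_lt_of_le (by positivity) (hT3 x).1
  set Z := N x - W * t with hZ
  set Y := T x - T y - W * t with hY
  set r := Real.sqrt t with hrdef
  have hr : 0 < r := Real.sqrt_pos.2 ht
  have hr2 : r * r = t := Real.mul_self_sqrt ht.le
  have h7 : 1 ≤ μ ^ 7 := one_le_pow₀ hμ
  change |Z| ≤ _
  by_cases hc : 1 ≤ W * r
  · set J : ℝ → ℝ := fun ξ => a ξ * ν ξ * T' ξ - W * T ξ + W * N ξ with hJ
    have hJd : ∀ ξ, HasDerivAt J 0 ξ := by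
      intro ξ
      have := ((hT2 ξ).sub ((hT1 ξ).const_mul W)).add ((hN ξ).const_mul W)
      refine this.congr_deriv (by ring)
    have hJc : J x = J y := is_const_of_deriv_eq_zero (fun ξ => (hJd ξ).differentiableAt)
      (fun ξ => (hJd ξ).deriv) x y
    have hb : ∀ ξ, 0 ≤ a ξ * ν ξ * T' ξ ∧ a ξ * ν ξ * T' ξ ≤ μ ^ 7 := by
      intro ξ
      have h1 := hν ξ
      have h2 := ha ξ
      have h3 := hT0 ξ
      refine ⟨by positivity, ?_⟩
      have : μ ^ 7 = μ * μ * μ ^ 5 := by ring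
      rw [this]
      gcongr
      · exact (hae ξ).2
      · exact (hνe ξ).2
      · exact (hT3 ξ).2
    have h1 : W * (Z - Y) = a y * ν y * T' y - a x * ν x * T' x := by
      simp only [hJ, hNy] at hJc
      rw [hZ, hY]
      linarith
    have h2 : |W * (Z - Y)| ≤ μ ^ 7 := by
      rw [h1, abs_le]
      constructor <;> linarith [(hb x).1, (hb x).2, (hb y).1, (hb y).2]
    rw [abs_mul, abs_of_nonneg hW] at h2
    have h3 : |Z - Y| ≤ μ ^ 7 * r := by
      calc |Z - Y| ≤ (W * r) * |Z - Y| := le_mul_of_one_le_left (abs_nonneg _) hc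
        _ = (W * |Z - Y|) * r := by ring
        _ ≤ μ ^ 7 * r := by gcongr
    have h4 : |Z| ≤ |Z - Y| + |Y| := by
      have := abs_add_le (Z - Y) Y
      rwa [sub_add_cancel] at this
    have := abs_nonneg Y
    nlinarith
  · push Not at hc
    have hWt : W * t ≤ r := by
      rw [← hr2, ← mul_assoc]
      exact mul_le_of_le_one_left hr.le hc.le
    have hWt0 : 0 ≤ W * t := by positivity
    have hT5 : |x - y| ≤ μ ^ 5 * |T x - T y| := by
      have hmono : ∀ p q : ℝ, p ≤ q → (q - p) ≤ μ ^ 5 * (T q - T p) := by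
        intro p q hpq
        have hm : Monotone (fun ξ => μ ^ 5 * T ξ - ξ) := by
          refine monotone_of_hasDerivAt_nonneg
            (fun ξ => ((hT1 ξ).const_mul (μ ^ 5)).sub (hasDerivAt_id ξ)) ?_
          intro ξ
          have := (hT3 ξ).1
          rw [div_le_iff₀ (by positivity)] at this
          simp only [Pi.zero_apply]
          linarith
        have := hm hpq
        simp only at this
        linarith
      rcases le_total x y with h | h
      · have := hmono x y h
        rw [abs_sub_comm, abs_of_nonneg (sub_nonneg.2 h), abs_sub_comm]
        refine this.trans ?_
        gcongr
        exact le_abs_self _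
      · have := hmono y x h
        rw [abs_of_nonneg (sub_nonneg.2 h)]
        refine this.trans ?_
        gcongr
        exact le_abs_self _
    have hN1 : |N x| ≤ μ * |x - y| := by
      have := intervalIntegral.norm_integral_le_of_norm_le_const (a := y) (b := x) (C := μ)
        (f := ν) (fun z _ => by rw [Real.norm_of_nonneg (hν z).le]; exact (hνe z).2)
      exact this
    have hTY : |T x - T y| ≤ |Y| + r := by
      have e : T x - T y = Y + W * t := by rw [hY]; ring
      rw [e]
      refine (abs_add_le _ _).trans ?_
      rw [abs_of_nonneg hWt0]
      linarith
    have hZ1 : |Z| ≤ |N x| + r := by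
      refine (abs_sub (N x) (W * t)).trans ?_
      rw [abs_of_nonneg hWt0]
      linarith
    have h6 : μ ^ 6 ≤ μ ^ 7 := pow_le_pow_right₀ hμ (by norm_num)
    have h8 : |N x| ≤ μ ^ 6 * (|Y| + r) := by
      calc |N x| ≤ μ * |x - y| := hN1
        _ ≤ μ * (μ ^ 5 * |T x - T y|) := by gcongr
        _ ≤ μ * (μ ^ 5 * (|Y| + r)) := by gcongr
        _ = _ := by ring
    have h9 : μ ^ 6 * (|Y| + r) ≤ μ ^ 7 * (|Y| + r) := by gcongr
    have := abs_nonneg Y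
    linarith

end Helpers

/-- Theorem 1.1 (lower Gaussian bound): for every `μ ≥ 1` there is `C > 0` such that any
fundamental solution `P` of the canonical equation satisfies
`P(t,x,y) ≥ (1/(C√t))·exp(−C|T(x) − T(y) − Wt|²/t)` for all `t > 0`, `x, y ∈ ℝ`. -/
theorem lower_gaussian_bound (μ : ℝ) (hμ : 1 ≤ μ) :
    ∃ C : ℝ, 0 < C ∧ ∀ ν a : ℝ → ℝ, Continuous ν → Continuous a →
      Elliptic μ ν → Elliptic μ a →
      ∀ W : ℝ, 0 ≤ W →
      ∀ T : ℝ → ℝ, IsCorrector μ ν a W T →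
      ∀ P : ℝ → ℝ → ℝ → ℝ, IsFundSol ν a W P →
      ∀ t : ℝ, 0 < t → ∀ x y : ℝ,
        1 / (C * Real.sqrt t) *
          Real.exp (-C * |T x - T y - W * t| ^ 2 / t) ≤ P t x y := by
  have hμ0 : 0 < μ := by linarith
  set c := μ ^ 7 + 1 with hc
  have hcp : 0 < c := by positivity
  set C₁ := 6 * (26 * μ ^ 6 * (1 + c)) ^ 2 with hC₁
  have hC1p : 0 < C₁ := by positivity
  refine ⟨max C₁ (2 * Real.exp C₁), lt_max_of_lt_left hC1p, ?_⟩
  intro ν a hνc hac hνe hae W hW T hT P hP t ht x y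
  set C := max C₁ (2 * Real.exp C₁) with hC
  have hCa : C₁ ≤ C := le_max_left _ _
  have hCb : 2 * Real.exp C₁ ≤ C := le_max_right _ _
  have hCp : 0 < C := hC1p.trans_le hCa
  have h1 := fund_bound hμ hνc hac hνe hae hW hP ht x y rfl
  have h2 := corrector_compare hμ hνc hνe hae hW hT ht x y
  refine le_trans ?_ h1
  set r := Real.sqrt t with hrdef
  have hr : 0 < r := Real.sqrt_pos.2 ht
  have hr2 : r ^ 2 = t := Real.sq_sqrt ht.le
  set Y := |T x - T y - W * t| with hY
  set Z := |(∫ ξ in y..x, ν ξ) - W * t| with hZ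
  have hY0 : 0 ≤ Y := abs_nonneg _
  have hZ0 : 0 ≤ Z := abs_nonneg _
  set γ := (2 * μ ^ 3 + 24 + 8 * (Z / r)) * μ ^ 3 with hγ
  have hYr : 0 ≤ Y / r := by positivity
  have hZr : 0 ≤ Z / r := by positivity
  have h3 : Z / r ≤ c * (Y / r + 1) := by
    rw [div_le_iff₀ hr]
    refine h2.trans (le_of_eq ?_)
    field_simp
    exact hc.symm
  have hμ3 : 1 ≤ μ ^ 3 := one_le_pow₀ hμ
  have h4 : γ ≤ 26 * μ ^ 6 * (1 + Z / r) := by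
    have e6 : μ ^ 6 = μ ^ 3 * μ ^ 3 := by ring
    have h5 : 2 * μ ^ 3 + 24 + 8 * (Z / r) ≤ 26 * μ ^ 3 * (1 + Z / r) := by
      have : 0 ≤ (μ ^ 3 - 1) * (Z / r) := mul_nonneg (by linarith) hZr
      nlinarith
    calc γ ≤ (26 * μ ^ 3 * (1 + Z / r)) * μ ^ 3 := by rw [hγ]; gcongr
      _ = _ := by ring
  have h5 : γ ≤ 26 * μ ^ 6 * (1 + c) * (1 + Y / r) := by
    refine h4.trans ?_
    rw [mul_assoc (26 * μ ^ 6) (1 + c)]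
    refine mul_le_mul_of_nonneg_left ?_ (by positivity)
    nlinarith
  have hγ1 : 1 ≤ γ := by rw [hγ]; nlinarith
  have h6 : γ + 2 * γ ^ 2 ≤ C₁ * (1 + Y ^ 2 / t) := by
    have e1 : γ ≤ γ ^ 2 := by nlinarith
    have e2 : γ ^ 2 ≤ (26 * μ ^ 6 * (1 + c) * (1 + Y / r)) ^ 2 := by gcongr
    have e3 : (1 + Y / r) ^ 2 ≤ 2 * (1 + Y ^ 2 / t) := by
      have : Y ^ 2 / t = (Y / r) ^ 2 := by rw [div_pow, hr2]
      rw [this]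
      nlinarith [sq_nonneg (1 - Y / r)]
    calc γ + 2 * γ ^ 2 ≤ 3 * (26 * μ ^ 6 * (1 + c) * (1 + Y / r)) ^ 2 := by linarith
      _ = 3 * (26 * μ ^ 6 * (1 + c)) ^ 2 * (1 + Y / r) ^ 2 := by ring
      _ ≤ 3 * (26 * μ ^ 6 * (1 + c)) ^ 2 * (2 * (1 + Y ^ 2 / t)) := by gcongr
      _ = _ := by rw [hC₁]; ring
  have hYt : 0 ≤ Y ^ 2 / t := by positivity
  have h7 : Real.exp (-C₁) * Real.exp (-C * Y ^ 2 / t) ≤ Real.exp (- γ - 2 * γ ^ 2) := by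
    rw [← Real.exp_add]
    apply Real.exp_le_exp.2
    have e : -C * Y ^ 2 / t = - (C * (Y ^ 2 / t)) := by ring
    have : C₁ * (Y ^ 2 / t) ≤ C * (Y ^ 2 / t) := by gcongr
    rw [e]
    linarith
  calc 1 / (C * r) * Real.exp (-C * Y ^ 2 / t)
      ≤ 1 / (2 * Real.exp C₁ * r) * Real.exp (-C * Y ^ 2 / t) := by gcongr
    _ = 1 / (2 * r) * (Real.exp (-C₁) * Real.exp (-C * Y ^ 2 / t)) := by
        rw [Real.exp_neg]; field_simp
    _ ≤ _ := by gcongr
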